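/- arXiv:2105.14084 — 3 statements merged into one kernel-verified Lean document; each statement's English description precedes it below -/
import Mathlib

section
/- For any C₀ > 0 and c₁ ∈ (0, 2) there exist C₂ > 0 and n₀ > 0 such that for all n ≥ n₀ and all ε with C₂/√(log n) ≤ ε ≤ 2 − c₁, the following holds with d = ⌈(2 − ε) n ln n⌉ and m = ⌊n / ln n⌋. Let (X, y) be an isotropic Gaussian sample of size n in dimension d with rows x₁,…,xₙ. Then with probability at least 1 − 1/n, the matrices K_{∖i} = X_{∖i} X_{∖i}ᵀ are invertible for all i ∈ [m] and max_{i ∈ [m]} | y_i y_{∖i}ᵀ (K_{∖i}⁻¹ − (1/d) I_{n−1}) X_{∖i} x_i | ≤ ε / (2 C₀). -/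
open MeasureTheory ProbabilityTheory Matrix

noncomputable section

/-- `X` has i.i.d. standard Gaussian entries (equivalently, its rows are i.i.d. `N(0, I_d)`). -/
structure IsGaussSample {Ω : Type*} [MeasurableSpace Ω] (μ : Measure Ω)
    {n d : ℕ} (X : Ω → Matrix (Fin n) (Fin d) ℝ) : Prop where
  meas : ∀ i j, Measurable fun ω => X ω i j
  indep : iIndepFun (fun (p : Fin n × Fin d) ω => X ω p.1 p.2) μ
  law : ∀ i j, Measure.map (fun ω => X ω i j) μ = gaussianReal 0 1

/-- `X` with row `i` deleted. -/
def rowDel {n d : ℕ} (X : Matrix (Fin n) (Fin d) ℝ) (i : Fin n) :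
    Matrix {j : Fin n // j ≠ i} (Fin d) ℝ := X.submatrix Subtype.val id

/-- `y` with entry `i` deleted. -/
def vecDel {n : ℕ} (y : Fin n → ℝ) (i : Fin n) : {j : Fin n // j ≠ i} → ℝ := fun j => y j.val

lemma gauss_lin {Ω ι : Type*} [MeasurableSpace Ω] [Fintype ι] (μ : Measure Ω)
    (Y : ι → Ω → ℝ) (hm : ∀ i, Measurable (Y i)) (hi : iIndepFun Y μ)
    (hl : ∀ i, μ.map (Y i) = gaussianReal 0 1) (a : ι → ℝ) :
    μ.map (fun ω => ∑ i, a i * Y i ω) = gaussianReal 0 (∑ i, a i ^ 2).toNNReal := by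
  have := hi.isProbabilityMeasure
  have h1 : ∀ i, μ.map (fun ω => a i * Y i ω) = gaussianReal 0 (a i ^ 2).toNNReal := by
    intro i
    have := gaussianReal_map_const_mul (μ := 0) (v := 1) (a i)
    rw [← hl i, Measure.map_map (by fun_prop) (hm i)] at this
    rw [Function.comp_def] at this
    rw [this]
    congr 1
    · simp
    · ext; simp [sq_nonneg]
  have h2 : iIndepFun (fun i ω => a i * Y i ω) μ := 
    hi.comp (fun i x => a i * x) (fun i => by fun_prop)
  have : IsFiniteMeasure (μ.map (fun ω => ∑ i, a i * Y i ω)) := inferInstance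
  apply Measure.ext_of_charFun
  rw [iIndepFun.charFun_map_fun_sum_eq_prod (fun i => by have := hm i; fun_prop) h2]
  ext t
  simp only [Finset.prod_apply, h1, charFun_gaussianReal]
  rw [← Complex.exp_sum]
  congr 1
  have : 0 ≤ ∑ i, a i ^ 2 := Finset.sum_nonneg (fun i _ => sq_nonneg _)
  simp [sq_nonneg, this, Finset.sum_mul, Finset.sum_div]

lemma cols_indep {Ω : Type*} [MeasurableSpace Ω] (μ : Measure Ω) {n d : ℕ}
    (X : Ω → Matrix (Fin n) (Fin d) ℝ) (_meas : ∀ i j, Measurable fun ω => X ω i j)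
    (indep : iIndepFun (fun (p : Fin n × Fin d) ω => X ω p.1 p.2) μ)
    (law : ∀ i j, Measure.map (fun ω => X ω i j) μ = gaussianReal 0 1) :
    iIndepFun (fun (j : Fin d) ω (i : Fin n) => X ω i j) μ := by
  have := indep.isProbabilityMeasure
  have hg : ∀ i j, HasGaussianLaw (fun ω => X ω i j) μ := fun i j => ⟨by rw [law i j]; infer_instance⟩
  have h := indep.hasGaussianLaw (fun p : Fin n × Fin d => hg p.1 p.2)
  have hh : HasGaussianLaw (fun ω (j : Fin d) (i : Fin n) => X ω i j) μ := by
    let L : (Fin n × Fin d → ℝ) →L[ℝ] (Fin d → Fin n → ℝ) := 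
      ContinuousLinearMap.pi fun j => ContinuousLinearMap.pi fun i => ContinuousLinearMap.proj (i, j)
    exact h.map L
  refine HasGaussianLaw.iIndepFun_of_covariance_eval (X := fun j i ω => X ω i j) hh ?_
  intro j j' hj i i'
  refine IndepFun.covariance_eq_zero ?_ (hg _ _).memLp_two (hg _ _).memLp_two
  exact indep.indepFun (i := (i, j)) (j := (i', j')) (by simp [hj])

lemma exp_aux (u : ℝ) (h1 : |u| ≤ 1/2) : Real.exp (-(u + u^2)) ≤ 1 - u := by
  rw [abs_le] at h1
  rw [Real.exp_neg, inv_le_comm₀ (Real.exp_pos _) (by linarith), inv_eq_one_div, div_le_iff₀ (by linarith)]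
  rcases le_total 0 u with h | h
  · have := Real.quadratic_le_exp_of_nonneg (x := u + u^2) (by positivity)
    have h3 : 1 ≤ (1 + (u + u^2) + (u+u^2)^2/2) * (1 - u) := by
      have : 0 ≤ u^2 * ((1-u)*(1+u)^2 - 2*u) := by
        apply mul_nonneg (sq_nonneg _)
        nlinarith [mul_nonneg h (by linarith : 0 ≤ 1/2 - u)]
      nlinarith
    refine h3.trans (mul_le_mul_of_nonneg_right this (by linarith))
  · have := Real.add_one_le_exp (u + u^2)
    have h3 : 1 ≤ (u + u^2 + 1) * (1 - u) := by
      have : 0 ≤ u^2 * (-u) := by apply mul_nonneg (sq_nonneg _); linarith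
      nlinarith
    refine h3.trans (mul_le_mul_of_nonneg_right this (by linarith))

lemma chi_integrable (θ : ℝ) (h : |θ| ≤ 1/4) :
    Integrable (fun x : ℝ => Real.exp (θ * x^2)) (gaussianReal 0 1) := by
  rw [abs_le] at h
  rw [gaussianReal_of_var_ne_zero _ one_ne_zero, gaussianPDF_def]
  rw [integrable_withDensity_iff_integrable_smul' (by fun_prop) (by simp)]
  have : Integrable (fun x : ℝ => (√(2*Real.pi))⁻¹ * Real.exp (-(1/2 - θ) * x^2)) := 
    (integrable_exp_neg_mul_sq (by linarith)).const_mul _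
  refine this.congr (Filter.Eventually.of_forall fun x => ?_)
  simp only [gaussianPDFReal_nonneg, ENNReal.toReal_ofReal, smul_eq_mul]
  rw [gaussianPDFReal_def]
  simp only [NNReal.coe_one, mul_one, sub_zero]
  rw [mul_assoc, ← Real.exp_add]
  congr 2
  ring

lemma chi_mgf (θ : ℝ) (h : |θ| ≤ 1/4) :
    ∫ x : ℝ, Real.exp (θ * x^2) ∂(gaussianReal 0 1) ≤ Real.exp (θ + 2 * θ^2) := by
  rw [integral_gaussianReal_eq_integral_smul one_ne_zero]
  have : (fun x : ℝ => gaussianPDFReal 0 1 x • Real.exp (θ * x^2)) = 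
     fun x : ℝ => (√(2*Real.pi))⁻¹ * Real.exp (-(1/2 - θ) * x^2) := by
    ext x
    rw [gaussianPDFReal_def]
    simp only [NNReal.coe_one, mul_one, sub_zero, smul_eq_mul]
    rw [mul_assoc, ← Real.exp_add]
    congr 2
    ring
  rw [this, integral_const_mul, integral_gaussian, ← Real.sqrt_inv, ← Real.sqrt_mul (by positivity)]
  have hh := exp_aux (2*θ) (by rw [abs_mul, abs_two]; linarith)
  rw [abs_le] at h
  apply Real.sqrt_le_iff.mpr ⟨(Real.exp_pos _).le, ?_⟩
  rw [← Real.exp_nat_mul]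
  have e : (2 * Real.pi)⁻¹ * (Real.pi / (1/2 - θ)) = (1 - 2*θ)⁻¹ := by
    have := Real.pi_pos
    have : (1 - 2*θ) ≠ 0 := by linarith
    have : (1/2 - θ) ≠ 0 := by linarith
    field_simp
  rw [e, inv_le_comm₀ (by linarith) (Real.exp_pos _), ← Real.exp_neg]
  have e2 : -(((2:ℕ):ℝ) * (θ + 2 * θ^2)) = -(2*θ + (2*θ)^2) := by push_cast; ring
  rw [e2]; exact hh

lemma chi_tail {Ω : Type*} [MeasurableSpace Ω] (μ : Measure Ω) {d : ℕ}
    (Z : Fin d → Ω → ℝ) (hm : ∀ i, Measurable (Z i)) (hi : iIndepFun Z μ)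
    (hl : ∀ i, μ.map (Z i) = gaussianReal 0 1) (δ : ℝ) (h0 : 0 < δ) (h1 : δ ≤ 1) :
    μ.real {ω | δ * d < |∑ j, Z j ω ^ 2 - d|} ≤ 2 * Real.exp (-(δ^2 * d / 8)) := by
  have := hi.isProbabilityMeasure
  have hi2 : iIndepFun (fun j ω => Z j ω ^ 2) μ := hi.comp (fun i x => x^2) (fun i => by fun_prop)
  have hint : ∀ θ : ℝ, |θ| ≤ 1/4 → ∀ j, Integrable (fun ω => Real.exp (θ * Z j ω ^ 2)) μ := by
    intro θ hθ j
    have := chi_integrable θ hθ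
    rw [← hl j] at this
    exact this.comp_measurable (hm j)
  have hmg : ∀ θ : ℝ, |θ| ≤ 1/4 → ∀ j, mgf (fun ω => Z j ω ^ 2) μ θ ≤ Real.exp (θ + 2 * θ^2) := by
    intro θ hθ j
    have := chi_mgf θ hθ
    rw [← hl j, integral_map (hm j).aemeasurable (by fun_prop)] at this
    exact this
  have hI : ∀ θ : ℝ, |θ| ≤ 1/4 → Integrable (fun ω => Real.exp (θ * (∑ j, (fun ω => Z j ω ^ 2)) ω)) μ :=
    fun θ hθ => hi2.integrable_exp_mul_sum (fun j => by have := hm j; fun_prop) (fun j _ => hint θ hθ j)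
  have hM : ∀ θ : ℝ, |θ| ≤ 1/4 → mgf (∑ j, (fun ω => Z j ω ^ 2)) μ θ ≤ Real.exp (d * (θ + 2 * θ^2)) := by
    intro θ hθ
    rw [hi2.mgf_sum (fun j => by have := hm j; fun_prop)]
    calc _ ≤ ∏ j : Fin d, Real.exp (θ + 2 * θ^2) := 
          Finset.prod_le_prod (fun _ _ => mgf_nonneg) (fun j _ => hmg θ hθ j)
      _ = _ := by rw [Finset.prod_const, ← Real.exp_nat_mul]; simp
  have a1 : |δ/4| ≤ 1/4 := by rw [abs_of_pos (by positivity)]; linarith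
  have a2 : |-(δ/4)| ≤ 1/4 := by rwa [abs_neg]
  have u := measure_ge_le_exp_mul_mgf (d + δ * d) (by positivity) (hI _ a1)
  have l := measure_le_le_exp_mul_mgf (d - δ * d) (by linarith) (hI _ a2)
  have hu := u.trans (mul_le_mul_of_nonneg_left (hM _ a1) (Real.exp_pos _).le)
  have hl := l.trans (mul_le_mul_of_nonneg_left (hM _ a2) (Real.exp_pos _).le)
  rw [← Real.exp_add] at hu hl
  have sub : {ω | δ * d < |∑ j, Z j ω ^ 2 - d|} ⊆ 
     {ω | d + δ * d ≤ (∑ j, (fun ω => Z j ω ^ 2)) ω} ∪ {ω | (∑ j, (fun ω => Z j ω ^ 2)) ω ≤ d - δ * d} := by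
    intro ω hω
    simp only [Set.mem_ofPred_eq, Set.mem_union, Finset.sum_apply] at hω ⊢
    rcases lt_abs.mp hω with h | h
    · left; linarith
    · right; linarith
  refine (measureReal_mono sub).trans ((measureReal_union_le _ _).trans ?_)
  have e1 : -(δ/4) * (d + δ * d) + d * (δ/4 + 2 * (δ/4)^2) = -(δ^2 * d / 8) := by ring
  have e2 : -(-(δ/4)) * (d - δ * d) + d * (-(δ/4) + 2 * (-(δ/4))^2) = -(δ^2 * d / 8) := by ring
  rw [e1] at hu
  rw [e2] at hl
  linarith

lemma quad_tail {Ω : Type*} [MeasurableSpace Ω] (μ : Measure Ω) {n d : ℕ}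
    (X : Ω → Matrix (Fin n) (Fin d) ℝ) (meas : ∀ i j, Measurable fun ω => X ω i j)
    (indep : iIndepFun (fun (p : Fin n × Fin d) ω => X ω p.1 p.2) μ)
    (law : ∀ i j, Measure.map (fun ω => X ω i j) μ = gaussianReal 0 1)
    (w : Fin n → ℝ) (δ : ℝ) (h0 : 0 < δ) (h1 : δ ≤ 1) :
    μ.real {ω | δ * d * ∑ i, w i ^ 2 < |∑ j, (∑ i, w i * X ω i j) ^ 2 - d * ∑ i, w i ^ 2|}
      ≤ 2 * Real.exp (-(δ^2 * d / 8)) := by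
  have := indep.isProbabilityMeasure
  set s := ∑ i, w i ^ 2 with hs
  have hs0 : 0 ≤ s := Finset.sum_nonneg fun i _ => sq_nonneg _
  rcases hs0.eq_or_lt with h | h
  · have hw : ∀ i, w i = 0 := by
      intro i
      have := (Finset.sum_eq_zero_iff_of_nonneg (fun i _ => sq_nonneg (w i))).mp h.symm i (Finset.mem_univ _)
      simpa using this
    simp [← h, hw]
    positivity
  · have hq : 0 < √s := Real.sqrt_pos.mpr h
    have hq2 : √s ^ 2 = s := Real.sq_sqrt hs0
    let Z : Fin d → Ω → ℝ := fun j ω => ∑ i, (w i / √s) * X ω i j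
    have hm : ∀ j, Measurable (Z j) := fun j => by 
      have := fun i => meas i j
      simp only [Z]; fun_prop
    have hi : iIndepFun Z μ := 
      (cols_indep μ X meas indep law).comp (fun j (x : Fin n → ℝ) => ∑ i, (w i / √s) * x i) 
        (fun j => by fun_prop)
    have hl : ∀ j, μ.map (Z j) = gaussianReal 0 1 := by
      intro j
      have hij : iIndepFun (fun i ω => X ω i j) μ := 
        indep.precomp (g := fun i => (i, j)) (fun a b hab => by simpa using hab)
      have := gauss_lin μ (fun i ω => X ω i j) (fun i => meas i j) hij (fun i => law i j) (fun i => w i / √s)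
      simp only [Z]
      rw [this]
      congr 1
      simp_rw [div_pow, hq2]
      rw [← Finset.sum_div, ← hs, div_self h.ne']
      simp
    refine le_trans (le_of_eq ?_) (chi_tail μ Z hm hi hl δ h0 h1)
    congr 1
    ext ω
    have e : ∑ j, (∑ i, w i * X ω i j) ^ 2 = s * ∑ j, Z j ω ^ 2 := by
      rw [Finset.mul_sum]
      refine Finset.sum_congr rfl fun j _ => ?_
      have : Z j ω = (∑ i, w i * X ω i j) / √s := by
        simp only [Z]; rw [Finset.sum_div]; refine Finset.sum_congr rfl fun i _ => by ring
      rw [this, div_pow, hq2]; field_simp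
    simp only [Set.mem_ofPred_eq]
    rw [e, show s * ∑ j, Z j ω ^ 2 - d * s = s * (∑ j, Z j ω ^ 2 - d) by ring, abs_mul, abs_of_pos h,
      mul_comm, mul_lt_mul_iff_right₀ h]

lemma dp_nonneg {ι : Type*} [Fintype ι] (w : ι → ℝ) : 0 ≤ w ⬝ᵥ w :=
  Finset.sum_nonneg fun _ _ => mul_self_nonneg _

lemma sum_union_le' {α : Type*} [DecidableEq α] (s t : Finset α) (f : α → ℝ) (h : ∀ a, 0 ≤ f a) :
    ∑ a ∈ s ∪ t, f a ≤ ∑ a ∈ s, f a + ∑ a ∈ t, f a := by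
  rw [← Finset.sum_union_inter]
  have : 0 ≤ ∑ a ∈ s ∩ t, f a := Finset.sum_nonneg fun a _ => h a
  linarith

lemma half_sum (m : ℕ) : ∑ k ∈ Finset.Icc (-(m:ℤ)) m, ((1:ℝ)/2)^k.natAbs ≤ 4 := by
  have hsub : Finset.Icc (-(m:ℤ)) m ⊆ (Finset.range (m+1)).image (fun j : ℕ => (j:ℤ)) ∪ 
      (Finset.range (m+1)).image (fun j : ℕ => -(j:ℤ)) := by
    intro k hk
    simp only [Finset.mem_Icc, Finset.mem_union, Finset.mem_image, Finset.mem_range] at hk ⊢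
    rcases le_total 0 k with h | h
    · left; exact ⟨k.natAbs, by omega, by omega⟩
    · right; exact ⟨k.natAbs, by omega, by omega⟩
  have h2 := sum_geometric_two_le (m+1)
  calc _ ≤ _ := Finset.sum_le_sum_of_subset_of_nonneg hsub (fun _ _ _ => by positivity)
    _ ≤ _ := sum_union_le' _ _ _ (fun _ => by positivity)
    _ ≤ 2 + 2 := by
      rw [Finset.sum_image (by intro a _ b _ h; simpa using h), Finset.sum_image (by intro a _ b _ h; simpa using h)]
      simp only [Int.natAbs_natCast, Int.natAbs_neg]
      linarith
    _ = 4 := by norm_num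

def latNet (n : ℕ) : Finset (Fin n → ℤ) :=
  (Fintype.piFinset (fun _ : Fin n => Finset.Icc (-((7*n:ℕ):ℤ)) ((7*n:ℕ):ℤ))).filter 
    (fun z => ∑ i, z i ^ 2 ≤ 7 * n)

lemma mem_latNet {n : ℕ} (z : Fin n → ℤ) (h : ∑ i, z i ^ 2 ≤ 7 * n) : z ∈ latNet n := by
  simp only [latNet, Finset.mem_filter, Fintype.mem_piFinset, Finset.mem_Icc]
  refine ⟨fun i => ?_, h⟩
  have h1 : z i ^ 2 ≤ 7 * n := 
    (Finset.single_le_sum (f := fun i => z i ^ 2) (fun i _ => sq_nonneg _) (Finset.mem_univ i)).trans h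
  have h2 : |z i| ≤ z i ^ 2 := by
    rw [← sq_abs]; rcases (abs_nonneg (z i)).eq_or_lt with h | h
    · rw [← h]; norm_num
    · nlinarith
  have h3 := abs_le.mp (h2.trans h1)
  push_cast; exact h3

lemma latNet_card (n : ℕ) : ((latNet n).card : ℝ) ≤ 512 ^ n := by
  have h1 : ∀ z ∈ latNet n, (1:ℝ) ≤ ∏ i, (128 * (1/2 : ℝ)^(z i).natAbs) := by
    intro z hz
    simp only [latNet, Finset.mem_filter] at hz
    rw [Finset.prod_mul_distrib, Finset.prod_const, Finset.prod_pow_eq_pow_sum, Finset.card_univ, Fintype.card_fin]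
    have hle : ∑ i, (z i).natAbs ≤ 7 * n := by
      have : (∑ i, ((z i).natAbs : ℤ)) ≤ ∑ i, z i ^ 2 := Finset.sum_le_sum fun i _ => by
        rw [Int.natCast_natAbs, ← sq_abs]; rcases (abs_nonneg (z i)).eq_or_lt with h | h
        · rw [← h]; norm_num
        · nlinarith
      have := this.trans hz.2
      exact_mod_cast this
    calc (1:ℝ) = 128 ^ n * (1/2)^(7*n) := by rw [pow_mul, ← mul_pow]; norm_num
      _ ≤ _ := by
        apply mul_le_mul_of_nonneg_left _ (by positivity)
        exact pow_le_pow_of_le_one (by norm_num) (by norm_num) hle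
  calc ((latNet n).card : ℝ) = ∑ z ∈ latNet n, 1 := by simp
    _ ≤ ∑ z ∈ latNet n, ∏ i, (128 * (1/2 : ℝ)^(z i).natAbs) := Finset.sum_le_sum h1
    _ ≤ ∑ z ∈ Fintype.piFinset (fun _ : Fin n => Finset.Icc (-((7*n:ℕ):ℤ)) ((7*n:ℕ):ℤ)), 
          ∏ i, (128 * (1/2 : ℝ)^(z i).natAbs) := 
        Finset.sum_le_sum_of_subset_of_nonneg (Finset.filter_subset _ _) 
          (fun _ _ _ => Finset.prod_nonneg fun _ _ => by positivity)
    _ = ∏ i : Fin n, ∑ k ∈ Finset.Icc (-((7*n:ℕ):ℤ)) ((7*n:ℕ):ℤ), (128 * (1/2 : ℝ)^k.natAbs) := by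
        rw [Finset.prod_univ_sum]
    _ ≤ ∏ i : Fin n, (512:ℝ) := by
        refine Finset.prod_le_prod (fun _ _ => Finset.sum_nonneg fun _ _ => by positivity) fun i _ => ?_
        rw [← Finset.mul_sum]
        have := half_sum (7*n)
        linarith
    _ = _ := by simp

lemma quad_bilin {ι : Type*} [Fintype ι] (A : Matrix ι ι ℝ) (hA : Aᵀ = A) (M : ℝ) 
    (h : ∀ w : ι → ℝ, |w ⬝ᵥ A *ᵥ w| ≤ M * (w ⬝ᵥ w)) (x y : ι → ℝ) :
    |x ⬝ᵥ A *ᵥ y| ≤ M / 2 * (x ⬝ᵥ x + y ⬝ᵥ y) := by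
  have hsym : y ⬝ᵥ A *ᵥ x = x ⬝ᵥ A *ᵥ y := by
    rw [dotProduct_mulVec, ← mulVec_transpose, hA, dotProduct_comm]
  have h1 := h (x + y)
  have h2 := h (x - y)
  simp only [mulVec_add, mulVec_sub, dotProduct_add, add_dotProduct, dotProduct_sub, sub_dotProduct, hsym,
    dotProduct_comm y x] at h1 h2
  rw [abs_le] at *
  constructor <;> linarith [h1.1, h1.2, h2.1, h2.2]

lemma net_bound {n : ℕ} (A : Matrix (Fin n) (Fin n) ℝ) (hA : Aᵀ = A) (η : ℝ) (hη : 0 ≤ η)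
    (hnet : ∀ z ∈ latNet n, |(fun i => (z i : ℝ)) ⬝ᵥ A *ᵥ (fun i => (z i : ℝ))| ≤ 
      η * ((fun i => (z i : ℝ)) ⬝ᵥ (fun i => (z i : ℝ)))) (w : Fin n → ℝ) :
    |w ⬝ᵥ A *ᵥ w| ≤ 4 * η * (w ⬝ᵥ w) := by
  rcases Nat.eq_zero_or_pos n with rfl | hn
  · simp [dotProduct]
  let S : Set (Fin n → ℝ) := {w | w ⬝ᵥ w = 1}
  have hScl : IsClosed S := isClosed_eq (by fun_prop) continuous_const
  have hScomp : IsCompact S := by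
    refine (isCompact_Icc (a := fun _ : Fin n => (-1:ℝ)) (b := fun _ => 1)).of_isClosed_subset hScl ?_
    intro w hw
    have : ∀ i, w i ^ 2 ≤ 1 := fun i => by
      have hw : w ⬝ᵥ w = 1 := hw
      rw [← hw]
      simp only [dotProduct, ← sq]
      exact Finset.single_le_sum (f := fun i => w i ^ 2) (fun i _ => sq_nonneg _) (Finset.mem_univ i)
    have h2 := fun i => abs_le.mp (abs_le_one_iff_mul_self_le_one.mpr (by simpa [sq] using this i))
    exact ⟨fun i => (h2 i).1, fun i => (h2 i).2⟩
  have hSne : S.Nonempty := ⟨Pi.single ⟨0, hn⟩ 1, by simp [S]⟩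
  obtain ⟨w0, hw0, hmax⟩ := hScomp.exists_isMaxOn hSne (f := fun w => |w ⬝ᵥ A *ᵥ w|) (by fun_prop)
  set M := |w0 ⬝ᵥ A *ᵥ w0| with hM
  have hM0 : 0 ≤ M := abs_nonneg _
  have hq : ∀ w : Fin n → ℝ, |w ⬝ᵥ A *ᵥ w| ≤ M * (w ⬝ᵥ w) := by
    intro w
    have hnn : 0 ≤ w ⬝ᵥ w := dp_nonneg w
    rcases hnn.eq_or_lt with h | h
    · have : w = 0 := dotProduct_self_eq_zero.mp h.symm
      simp [this]
    · have hs : 0 < √(w ⬝ᵥ w) := Real.sqrt_pos.mpr h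
      have hs2 : √(w ⬝ᵥ w) * √(w ⬝ᵥ w) = w ⬝ᵥ w := Real.mul_self_sqrt hnn
      have hmem : (√(w ⬝ᵥ w))⁻¹ • w ∈ S := by
        simp only [S, Set.mem_ofPred_eq, smul_dotProduct, dotProduct_smul, smul_eq_mul]
        rw [← mul_assoc, ← mul_inv, hs2, inv_mul_cancel₀ h.ne']
      have := hmax hmem
      simp only [Set.mem_ofPred_eq, mulVec_smul, smul_dotProduct, dotProduct_smul, smul_eq_mul] at this
      rw [← mul_assoc, ← mul_inv, hs2, abs_mul, abs_of_pos (inv_pos.mpr h), inv_mul_le_iff₀ h] at this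
      linarith
  have hn' : (0:ℝ) < n := by exact_mod_cast hn
  set h : ℝ := 1 / (2 * √n) with hh
  have hsn : 0 < √(n:ℝ) := Real.sqrt_pos.mpr hn'
  have hhp : 0 < h := by positivity
  have hh2 : h^2 * n = 1/4 := by
    rw [hh, div_pow, mul_pow, Real.sq_sqrt hn'.le]; field_simp; norm_num
  let z : Fin n → ℤ := fun i => round (w0 i / h)
  let zr : Fin n → ℝ := fun i => (z i : ℝ)
  let u : Fin n → ℝ := h • zr
  have hw0' : w0 ⬝ᵥ w0 = 1 := hw0
  have he : (w0 - u) ⬝ᵥ (w0 - u) ≤ 1/16 := by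
    have : ∀ i, (w0 i - u i) * (w0 i - u i) ≤ h^2/4 := by
      intro i
      have hr := abs_sub_round (w0 i / h)
      have e : w0 i - u i = h * (w0 i / h - round (w0 i / h)) := by
        simp only [u, zr, z, Pi.smul_apply, smul_eq_mul]; field_simp
      rw [e, ← sq, mul_pow, ← sq_abs (w0 i / h - _)]
      have : |w0 i / h - round (w0 i / h)|^2 ≤ (1/2)^2 := pow_le_pow_left₀ (abs_nonneg _) hr 2
      nlinarith [sq_nonneg h]
    calc (w0 - u) ⬝ᵥ (w0 - u) ≤ ∑ i : Fin n, h^2/4 := Finset.sum_le_sum fun i _ => this i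
      _ = (h^2 * n)/4 := by simp; ring
      _ = 1/16 := by rw [hh2]; norm_num
  set e := w0 - u with hedef
  have hu : u = w0 - e := by simp [hedef]
  have n1 := dp_nonneg (w0 + (4:ℝ) • e)
  have n2 := dp_nonneg (w0 + (4:ℝ) • e)
  simp only [dotProduct_add, add_dotProduct, smul_dotProduct, dotProduct_smul, smul_eq_mul, 
    dotProduct_comm e w0, hw0'] at n1 n2
  have huu : u ⬝ᵥ u ≤ 25/16 := by
    rw [hu]
    simp only [dotProduct_sub, sub_dotProduct, dotProduct_comm e w0, hw0']
    linarith
  have hwu : (w0 + u) ⬝ᵥ (w0 + u) ≤ 81/16 := by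
    rw [hu]
    simp only [dotProduct_sub, sub_dotProduct, dotProduct_comm e w0, hw0', dotProduct_add, add_dotProduct]
    linarith
  have huz : u ⬝ᵥ u = h^2 * (zr ⬝ᵥ zr) := by
    simp only [u, smul_dotProduct, dotProduct_smul, smul_eq_mul]; ring
  have hzz : ∑ i, z i ^ 2 ≤ 7 * n := by
    have : zr ⬝ᵥ zr ≤ 7 * n := by
      have h4 : zr ⬝ᵥ zr = 4 * n * (u ⬝ᵥ u) := by 
        rw [huz]
        calc zr ⬝ᵥ zr = 4 * (1/4) * (zr ⬝ᵥ zr) := by ring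
          _ = _ := by rw [← hh2]; ring
      rw [h4]; nlinarith
    have h5 : zr ⬝ᵥ zr = ((∑ i, z i ^ 2 : ℤ) : ℝ) := by simp [zr, dotProduct, sq]
    rw [h5] at this
    exact_mod_cast this
  have hqu : |u ⬝ᵥ A *ᵥ u| ≤ η * (u ⬝ᵥ u) := by
    have := hnet z (mem_latNet z hzz)
    rw [huz]
    simp only [u, smul_dotProduct, dotProduct_smul, smul_eq_mul, mulVec_smul]
    rw [← mul_assoc, abs_mul, abs_of_pos (by positivity)]
    have h6 := mul_le_mul_of_nonneg_left this (by positivity : 0 ≤ h * h)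
    refine h6.trans (le_of_eq ?_)
    simp only [zr]; ring
  have hb := quad_bilin A hA M hq ((3:ℝ) • e) ((1/3:ℝ) • (w0 + u))
  simp only [smul_dotProduct, dotProduct_smul, smul_eq_mul, mulVec_smul] at hb
  have hdiff : w0 ⬝ᵥ A *ᵥ w0 = u ⬝ᵥ A *ᵥ u + 3 * (1/3 * (e ⬝ᵥ A *ᵥ (w0 + u))) := by
    have hsym : u ⬝ᵥ A *ᵥ w0 = w0 ⬝ᵥ A *ᵥ u := by
      rw [dotProduct_mulVec, ← mulVec_transpose, hA, dotProduct_comm]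
    simp only [hedef, mulVec_add, dotProduct_add, sub_dotProduct, hsym]
    ring
  have hMle : M ≤ 4 * η := by
    have h7 : M ≤ |u ⬝ᵥ A *ᵥ u| + |3 * (1/3 * (e ⬝ᵥ A *ᵥ (w0 + u)))| := by
      rw [hM, hdiff]; exact abs_add_le _ _
    have e3 : 1/3 * (3 * (e ⬝ᵥ A *ᵥ (w0 + u))) = 3 * (1/3 * (e ⬝ᵥ A *ᵥ (w0 + u))) := by ring
    try rw [e3] at hb
    have h8 : M / 2 * (3 * (3 * (e ⬝ᵥ e)) + 1/3 * (1/3 * ((w0 + u) ⬝ᵥ (w0 + u)))) ≤ M/2 * (9/8) := by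
      apply mul_le_mul_of_nonneg_left _ (by positivity)
      linarith
    have h9 : η * (u ⬝ᵥ u) ≤ η * (25/16) := mul_le_mul_of_nonneg_left huu hη
    linarith
  exact (hq w).trans (mul_le_mul_of_nonneg_right hMle (dp_nonneg w))

lemma det_bound {ι : Type*} [Fintype ι] [DecidableEq ι] {d : ℕ} (Z : Matrix ι (Fin d) ℝ) (D M : ℝ)
    (hD : 0 < D) (hM : 0 < M) (hMD : M ≤ D / 2)
    (hB : ∀ w : ι → ℝ, |w ⬝ᵥ (Z * Zᵀ - D • 1) *ᵥ w| ≤ M * (w ⬝ᵥ w)) (y : ι → ℝ) :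
    IsUnit (Z * Zᵀ).det ∧ 
    (Zᵀ *ᵥ (((Z * Zᵀ)⁻¹ - D⁻¹ • 1) *ᵥ y)) ⬝ᵥ (Zᵀ *ᵥ (((Z * Zᵀ)⁻¹ - D⁻¹ • 1) *ᵥ y)) ≤ 
      6 * M^2 / D^3 * (y ⬝ᵥ y) := by
  set K := Z * Zᵀ with hK
  set B := K - D • (1 : Matrix ι ι ℝ) with hBdef
  have hKs : Kᵀ = K := by simp [hK]
  have hBs : Bᵀ = B := by simp [hBdef, hKs]
  have hBw : ∀ w : ι → ℝ, B *ᵥ w = K *ᵥ w - D • w := fun w => by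
    simp [hBdef, sub_mulVec, smul_mulVec]
  have hwB : ∀ w : ι → ℝ, w ⬝ᵥ B *ᵥ w = w ⬝ᵥ K *ᵥ w - D * (w ⬝ᵥ w) := fun w => by
    rw [hBw]; simp [dotProduct_sub]
  have hlow : ∀ w : ι → ℝ, D / 2 * (w ⬝ᵥ w) ≤ w ⬝ᵥ K *ᵥ w := fun w => by
    have h1 := (abs_le.mp (hB w)).1
    rw [hwB] at h1
    have := mul_le_mul_of_nonneg_right hMD (dp_nonneg w)
    linarith
  have hup : ∀ w : ι → ℝ, w ⬝ᵥ K *ᵥ w ≤ 3 * D / 2 * (w ⬝ᵥ w) := fun w => by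
    have h1 := (abs_le.mp (hB w)).2
    rw [hwB] at h1
    have := mul_le_mul_of_nonneg_right hMD (dp_nonneg w)
    linarith
  have hunit : IsUnit K.det := by
    rw [isUnit_iff_ne_zero]
    intro h0
    obtain ⟨w, hw, hKw⟩ := Matrix.exists_mulVec_eq_zero_iff.mpr h0
    have h1 := hlow w
    rw [hKw, dotProduct_zero] at h1
    have h2 : 0 < w ⬝ᵥ w := lt_of_le_of_ne (dp_nonneg w) (fun h => hw (dotProduct_self_eq_zero.mp h.symm))
    have : 0 < D / 2 * (w ⬝ᵥ w) := by positivity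
    linarith
  refine ⟨hunit, ?_⟩
  set z := K⁻¹ *ᵥ y with hz
  have hKz : K *ᵥ z = y := by
    rw [hz, mulVec_mulVec, Matrix.mul_nonsing_inv _ hunit, one_mulVec]
  set r := (K⁻¹ - D⁻¹ • 1) *ᵥ y with hr
  have hr2 : r = (-D⁻¹) • (B *ᵥ z) := by
    rw [hBw, hKz, hr, sub_mulVec, ← hz, smul_mulVec, one_mulVec]
    ext i
    simp only [Pi.sub_apply, Pi.smul_apply, smul_eq_mul]
    field_simp
    ring
  have hzz : z ⬝ᵥ z ≤ 4 * (y ⬝ᵥ y) / D^2 := by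
    have h1 := hlow z
    rw [hKz] at h1
    have h2 := dp_nonneg ((D/2) • z - y)
    simp only [dotProduct_sub, sub_dotProduct, smul_dotProduct, dotProduct_smul, smul_eq_mul, 
      dotProduct_comm y z] at h2
    rw [le_div_iff₀ (by positivity)]
    have h3 := mul_le_mul_of_nonneg_left h1 hD.le
    nlinarith
  have hBz : (B *ᵥ z) ⬝ᵥ (B *ᵥ z) ≤ M^2 * (z ⬝ᵥ z) := by
    have h1 := (abs_le.mp (quad_bilin B hBs M hB ((M⁻¹) • (B *ᵥ z)) z)).2
    simp only [smul_dotProduct, dotProduct_smul, smul_eq_mul] at h1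
    set a := (B *ᵥ z) ⬝ᵥ (B *ᵥ z)
    have h3 := mul_le_mul_of_nonneg_left h1 (by positivity : 0 ≤ 2 * M)
    have e1 : 2 * M * (M⁻¹ * a) = 2 * a := by field_simp
    have e2 : 2 * M * (M / 2 * (M⁻¹ * (M⁻¹ * a) + z ⬝ᵥ z)) = a + M^2 * (z ⬝ᵥ z) := by field_simp
    rw [e1, e2] at h3
    linarith
  have hv : (Zᵀ *ᵥ r) ⬝ᵥ (Zᵀ *ᵥ r) = r ⬝ᵥ K *ᵥ r := by
    rw [hK, ← mulVec_mulVec, dotProduct_mulVec r Z, ← mulVec_transpose]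
  rw [hv]
  refine (hup r).trans ?_
  have hrr : r ⬝ᵥ r = (B *ᵥ z) ⬝ᵥ (B *ᵥ z) / D^2 := by
    rw [hr2]; simp only [smul_dotProduct, dotProduct_smul, smul_eq_mul]; field_simp
  rw [hrr]
  calc 3 * D / 2 * ((B *ᵥ z) ⬝ᵥ (B *ᵥ z) / D^2) ≤ 3 * D / 2 * ((M^2 * (4 * (y ⬝ᵥ y) / D^2)) / D^2) := by
        gcongr
        exact hBz.trans (by gcongr)
    _ = _ := by field_simp; ring

lemma form_eq {ι : Type*} [Fintype ι] [DecidableEq ι] {d : ℕ} (Z : Matrix ι (Fin d) ℝ) (c : ℝ)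
    (y : ι → ℝ) (x : Fin d → ℝ) :
    y ⬝ᵥ (((Z * Zᵀ)⁻¹ - c • 1) *ᵥ (Z *ᵥ x)) = 
      ∑ j, (Zᵀ *ᵥ (((Z * Zᵀ)⁻¹ - c • 1) *ᵥ y)) j * x j := by
  have hs : ((Z * Zᵀ)⁻¹ - c • (1 : Matrix ι ι ℝ))ᵀ = (Z * Zᵀ)⁻¹ - c • 1 := by
    simp [Matrix.transpose_nonsing_inv]
  change _ = (Zᵀ *ᵥ (((Z * Zᵀ)⁻¹ - c • 1) *ᵥ y)) ⬝ᵥ x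
  rw [dotProduct_mulVec, ← mulVec_transpose, hs, dotProduct_mulVec, ← mulVec_transpose]

lemma V_meas {ι : Type*} [Fintype ι] [DecidableEq ι] {d : ℕ} (c : ℝ) (y : ι → ℝ) :
    Measurable (fun Z : ι → Fin d → ℝ => 
      (Matrix.of Z)ᵀ *ᵥ (((Matrix.of Z * (Matrix.of Z)ᵀ)⁻¹ - c • 1) *ᵥ y)) := by
  have hof : Continuous (fun Z : ι → Fin d → ℝ => Matrix.of Z) := continuous_id
  have hK : Continuous (fun Z : ι → Fin d → ℝ => Matrix.of Z * (Matrix.of Z)ᵀ) := 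
    hof.matrix_mul hof.matrix_transpose
  have hinv : ∀ a b, Measurable (fun Z : ι → Fin d → ℝ => (Matrix.of Z * (Matrix.of Z)ᵀ)⁻¹ a b) := by
    intro a b
    simp only [Matrix.inv_def, Ring.inverse_eq_inv', Matrix.smul_apply, smul_eq_mul]
    exact hK.matrix_det.measurable.inv.mul (hK.matrix_adjugate.matrix_elem a b).measurable
  rw [measurable_pi_iff]
  intro j
  have hent : ∀ a, Measurable (fun Z : ι → Fin d → ℝ => Z a j) := fun a => by fun_prop
  simp only [mulVec, dotProduct, Matrix.transpose_apply, Matrix.of_apply, Matrix.sub_apply]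
  refine Finset.measurable_sum _ fun a _ => (hent a).mul ?_
  refine Finset.measurable_sum _ fun b _ => ?_
  exact ((hinv a b).sub measurable_const).mul measurable_const

lemma lin_tail {Ω : Type*} [MeasurableSpace Ω] (μ : Measure Ω) {d : ℕ}
    (Y : Fin d → Ω → ℝ) (hm : ∀ i, Measurable (Y i)) (hi : iIndepFun Y μ)
    (hl : ∀ i, μ.map (Y i) = gaussianReal 0 1) (v : Fin d → ℝ) (s t : ℝ) (hs : 0 < s) (ht : 0 < t)
    (hv : v ⬝ᵥ v ≤ s) :
    μ.real {ω | t < |∑ j, v j * Y j ω|} ≤ 2 * Real.exp (-(t^2 / (2 * s))) := by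
  have := hi.isProbabilityMeasure
  have hlaw := gauss_lin μ Y hm hi hl v
  have hmeas : Measurable (fun ω => ∑ j, v j * Y j ω) := by fun_prop
  have hI : ∀ θ : ℝ, Integrable (fun ω => Real.exp (θ * ∑ j, v j * Y j ω)) μ := by
    intro θ
    have := integrable_exp_mul_gaussianReal (μ := 0) (v := (∑ i, v i ^ 2).toNNReal) θ
    rw [← hlaw] at this
    exact this.comp_measurable hmeas
  have hmg : ∀ θ : ℝ, mgf (fun ω => ∑ j, v j * Y j ω) μ θ ≤ Real.exp (s * θ^2 / 2) := by
    intro θ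
    rw [mgf_gaussianReal hlaw]
    have h0 : 0 ≤ ∑ i, v i ^ 2 := Finset.sum_nonneg fun i _ => sq_nonneg _
    have h1 : ∑ i, v i ^ 2 ≤ s := by simpa [dotProduct, sq] using hv
    rw [Real.coe_toNNReal _ h0]
    apply Real.exp_le_exp.mpr
    simp only [zero_mul, zero_add]
    gcongr
  have u := (measure_ge_le_exp_mul_mgf t (by positivity : 0 ≤ t / s) (hI _)).trans
    (mul_le_mul_of_nonneg_left (hmg _) (Real.exp_pos _).le)
  have l := (measure_le_le_exp_mul_mgf (-t) (by simp only [Left.neg_nonpos_iff]; positivity : -(t / s) ≤ 0) (hI _)).trans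
    (mul_le_mul_of_nonneg_left (hmg _) (Real.exp_pos _).le)
  rw [← Real.exp_add] at u l
  have e1 : -(t/s) * t + s * (t/s)^2/2 = -(t^2 / (2 * s)) := by field_simp; ring
  have e2 : -(-(t/s)) * (-t) + s * (-(t/s))^2/2 = -(t^2 / (2 * s)) := by field_simp; ring
  rw [e1] at u
  rw [e2] at l
  have sub : {ω | t < |∑ j, v j * Y j ω|} ⊆ 
     {ω | t ≤ ∑ j, v j * Y j ω} ∪ {ω | ∑ j, v j * Y j ω ≤ -t} := by
    intro ω hω
    simp only [Set.mem_ofPred_eq, Set.mem_union] at hω ⊢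
    rcases lt_abs.mp hω with h | h
    · left; linarith
    · right; linarith
  refine (measureReal_mono sub).trans ((measureReal_union_le _ _).trans ?_)
  linarith

lemma cond_tail {Ω E : Type*} [MeasurableSpace Ω] [MeasurableSpace E] (μ : Measure Ω) {d : ℕ}
    (Y : Fin d → Ω → ℝ) (hm : ∀ i, Measurable (Y i)) (hi : iIndepFun Y μ)
    (hl : ∀ i, μ.map (Y i) = gaussianReal 0 1) (Z : Ω → E) (hZ : Measurable Z)
    (hind : IndepFun Z (fun ω j => Y j ω) μ)
    (V : E → Fin d → ℝ) (hV : Measurable V) (s t : ℝ) (hs : 0 < s) (ht : 0 < t) :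
    μ {ω | t < |∑ j, V (Z ω) j * Y j ω| ∧ V (Z ω) ⬝ᵥ V (Z ω) ≤ s} ≤ 
      ENNReal.ofReal (2 * Real.exp (-(t^2 / (2 * s)))) := by
  have := hi.isProbabilityMeasure
  have hYm : Measurable (fun ω j => Y j ω) := measurable_pi_iff.mpr hm
  let T : Set (E × (Fin d → ℝ)) := {p | t < |∑ j, V p.1 j * p.2 j| ∧ V p.1 ⬝ᵥ V p.1 ≤ s}
  have hVj : ∀ j, Measurable (fun e => V e j) := fun j => (measurable_pi_apply j).comp hV
  have hT : MeasurableSet T := by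
    have h1 : MeasurableSet {p : E × (Fin d → ℝ) | t < |∑ j, V p.1 j * p.2 j|} :=
      measurableSet_lt measurable_const (by fun_prop)
    have h2 : MeasurableSet {p : E × (Fin d → ℝ) | V p.1 ⬝ᵥ V p.1 ≤ s} := by
      refine measurableSet_le ?_ measurable_const
      simp only [dotProduct]; fun_prop
    exact h1.inter h2
  have e : {ω | t < |∑ j, V (Z ω) j * Y j ω| ∧ V (Z ω) ⬝ᵥ V (Z ω) ≤ s} = 
     (fun ω => (Z ω, fun j => Y j ω)) ⁻¹' T := rfl
  rw [e, ← Measure.map_apply (hZ.prodMk hYm) hT, 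
    IndepFun.map_prod_eq_prod_map_map hZ.aemeasurable hYm.aemeasurable hind]
  have := Measure.isProbabilityMeasure_map (μ := μ) hZ.aemeasurable
  have := Measure.isProbabilityMeasure_map (μ := μ) hYm.aemeasurable
  rw [Measure.prod_apply hT]
  calc _ ≤ ∫⁻ _, ENNReal.ofReal (2 * Real.exp (-(t^2 / (2 * s)))) ∂(μ.map Z) := by
        refine lintegral_mono fun z => ?_
        rw [Measure.map_apply hYm (measurable_prodMk_left hT)]
        by_cases hz : V z ⬝ᵥ V z ≤ s
        · have := lin_tail μ Y hm hi hl (V z) s t hs ht hz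
          rw [← ofReal_measureReal]
          apply ENNReal.ofReal_le_ofReal
          refine le_trans (measureReal_mono ?_) this
          intro ω hω
          exact hω.1
        · have : (fun ω j => Y j ω) ⁻¹' (Prod.mk z ⁻¹' T) = ∅ := by
            ext ω; simp [T, hz]
          rw [this]; simp
    _ = _ := by simp

lemma op_event {Ω : Type*} [MeasurableSpace Ω] (μ : Measure Ω) {n d : ℕ}
    (X : Ω → Matrix (Fin n) (Fin d) ℝ) (hX : IsGaussSample μ X) (δ : ℝ) (h0 : 0 < δ) (h1 : δ ≤ 1) :
    μ {ω | ¬ ∀ w : Fin n → ℝ, |w ⬝ᵥ (X ω * (X ω)ᵀ - (d:ℝ) • 1) *ᵥ w| ≤ 4 * (δ * d) * (w ⬝ᵥ w)} ≤ 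
      ENNReal.ofReal (512 ^ n * (2 * Real.exp (-(δ^2 * d / 8)))) := by
  have := hX.indep.isProbabilityMeasure
  let bad : (Fin n → ℤ) → Set Ω := fun z => {ω | δ * d * ∑ i, (z i : ℝ) ^ 2 < 
    |∑ j, (∑ i, (z i : ℝ) * X ω i j) ^ 2 - d * ∑ i, (z i : ℝ) ^ 2|}
  have hbad : ∀ z, μ (bad z) ≤ ENNReal.ofReal (2 * Real.exp (-(δ^2 * d / 8))) := by
    intro z
    rw [← ofReal_measureReal]
    exact ENNReal.ofReal_le_ofReal (quad_tail μ X hX.meas hX.indep hX.law (fun i => (z i : ℝ)) δ h0 h1)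
  have hsub : {ω | ¬ ∀ w : Fin n → ℝ, |w ⬝ᵥ (X ω * (X ω)ᵀ - (d:ℝ) • 1) *ᵥ w| ≤ 4 * (δ * d) * (w ⬝ᵥ w)} ⊆ 
      ⋃ z ∈ latNet n, bad z := by
    intro ω hω
    by_contra hcon
    simp only [Set.mem_iUnion, not_exists] at hcon
    apply hω
    refine net_bound _ (by simp) (δ * d) (by positivity) fun z hz => ?_
    have h2 := hcon z hz
    simp only [bad, Set.mem_ofPred_eq, not_lt] at h2
    have e1 : (fun i => (z i : ℝ)) ⬝ᵥ (fun i => (z i : ℝ)) = ∑ i, (z i : ℝ)^2 := by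
      simp [dotProduct, sq]
    have e2 : (fun i => (z i : ℝ)) ⬝ᵥ (X ω * (X ω)ᵀ - (d:ℝ) • 1) *ᵥ (fun i => (z i : ℝ)) = 
        ∑ j, (∑ i, (z i : ℝ) * X ω i j) ^ 2 - d * ∑ i, (z i : ℝ) ^ 2 := by
      rw [sub_mulVec, dotProduct_sub, smul_mulVec, one_mulVec, dotProduct_smul, e1, ← mulVec_mulVec,
        dotProduct_mulVec, mulVec_transpose]
      simp [dotProduct, vecMul, sq]
    rw [e1, e2]
    exact h2
  calc _ ≤ _ := measure_mono hsub
    _ ≤ ∑ z ∈ latNet n, μ (bad z) := measure_biUnion_finset_le _ _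
    _ ≤ ∑ z ∈ latNet n, ENNReal.ofReal (2 * Real.exp (-(δ^2 * d / 8))) := Finset.sum_le_sum fun z _ => hbad z
    _ = ENNReal.ofReal ((latNet n).card * (2 * Real.exp (-(δ^2 * d / 8)))) := by
      rw [Finset.sum_const, nsmul_eq_mul, ENNReal.ofReal_mul (p := ((latNet n).card : ℝ)) (Nat.cast_nonneg _), ENNReal.ofReal_natCast]
    _ ≤ _ := by
      apply ENNReal.ofReal_le_ofReal
      exact mul_le_mul_of_nonneg_right (latNet_card n) (by positivity)

lemma rowDel_quad {n d : ℕ} (X : Matrix (Fin n) (Fin d) ℝ) (i : Fin n) (D M : ℝ)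
    (h : ∀ w : Fin n → ℝ, |w ⬝ᵥ (X * Xᵀ - D • 1) *ᵥ w| ≤ M * (w ⬝ᵥ w)) (w : {j : Fin n // j ≠ i} → ℝ) :
    |w ⬝ᵥ (rowDel X i * (rowDel X i)ᵀ - D • 1) *ᵥ w| ≤ M * (w ⬝ᵥ w) := by
  let w' : Fin n → ℝ := fun j => if h : j ≠ i then w ⟨j, h⟩ else 0
  have key : ∀ f : Fin n → ℝ, ∑ j, w' j * f j = ∑ j : {j : Fin n // j ≠ i}, w j * f j.1 := by
    intro f
    rw [← Fintype.sum_subtype_add_sum_subtype (fun j => j ≠ i) (fun j => w' j * f j)]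
    have h2 : ∑ j : {j : Fin n // ¬ j ≠ i}, w' j.1 * f j.1 = 0 := 
      Finset.sum_eq_zero fun j _ => by simp [w', j.2]
    rw [h2, add_zero]
    refine Finset.sum_congr rfl fun j _ => ?_
    simp [w', j.2]
  have e1 : w' ⬝ᵥ w' = w ⬝ᵥ w := by
    simp only [dotProduct]
    rw [key]
    refine Finset.sum_congr rfl fun j _ => ?_
    simp [w', j.2]
  have e2 : w' ᵥ* X = w ᵥ* rowDel X i := by
    ext k
    simp only [vecMul, dotProduct]
    rw [key]
    rfl
  have h3 := h w'
  rw [sub_mulVec, dotProduct_sub, smul_mulVec, one_mulVec, dotProduct_smul, e1, ← mulVec_mulVec,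
        dotProduct_mulVec, mulVec_transpose, e2] at h3
  rw [sub_mulVec, dotProduct_sub, smul_mulVec, one_mulVec, dotProduct_smul, ← mulVec_mulVec,
        dotProduct_mulVec, mulVec_transpose]
  exact h3

lemma core {Ω : Type*} [MeasurableSpace Ω] (μ : Measure Ω) {n d : ℕ}
    (X : Ω → Matrix (Fin n) (Fin d) ℝ) (hX : IsGaussSample μ X) (y : Fin n → ℝ) 
    (hy : ∀ i, y i = 1 ∨ y i = -1) (hd : 0 < d) (δ s t : ℝ) (h0 : 0 < δ) (h1 : δ ≤ 1/8) 
    (hs : 0 < s) (hs2 : 96 * δ^2 * n / d ≤ s) (ht : 0 < t) (m : ℕ) :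
    μ {ω | ∀ i : Fin n, (i : ℕ) < m →
              IsUnit (rowDel (X ω) i * (rowDel (X ω) i)ᵀ).det ∧
              |y i * (vecDel y i ⬝ᵥ
                (((rowDel (X ω) i * (rowDel (X ω) i)ᵀ)⁻¹ -
                    ((d : ℝ))⁻¹ • 1) *ᵥ
                  (rowDel (X ω) i *ᵥ X ω i)))| ≤ t}ᶜ ≤ 
      ENNReal.ofReal (512 ^ n * (2 * Real.exp (-(δ^2 * d / 8))) + 
        n * (2 * Real.exp (-(t^2 / (2 * s))))) := by
  have := hX.indep.isProbabilityMeasure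
  have hd' : (0:ℝ) < d := by exact_mod_cast hd
  let E : Set Ω := {ω | ¬ ∀ w : Fin n → ℝ, |w ⬝ᵥ (X ω * (X ω)ᵀ - (d:ℝ) • 1) *ᵥ w| ≤ 4 * (δ * d) * (w ⬝ᵥ w)}
  let V : (i : Fin n) → ({j : Fin n // j ≠ i} → Fin d → ℝ) → Fin d → ℝ := fun i Z => 
      (Matrix.of Z)ᵀ *ᵥ (((Matrix.of Z * (Matrix.of Z)ᵀ)⁻¹ - (d:ℝ)⁻¹ • 1) *ᵥ (vecDel y i))
  let Z : (i : Fin n) → Ω → ({j : Fin n // j ≠ i} → Fin d → ℝ) := fun i ω j => X ω j.1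
  let F : Fin n → Set Ω := fun i => {ω | t < |∑ j, V i (Z i ω) j * X ω i j| ∧ 
    V i (Z i ω) ⬝ᵥ V i (Z i ω) ≤ s}
  have hE : μ E ≤ _ := op_event μ X hX δ h0 (by linarith)
  have hF : ∀ i, μ (F i) ≤ ENNReal.ofReal (2 * Real.exp (-(t^2 / (2 * s)))) := by
    intro i
    refine cond_tail μ (fun j ω => X ω i j) (hX.meas i) ?_ (hX.law i) (Z i) ?_ ?_ (V i) (V_meas _ _) s t hs ht
    · exact hX.indep.precomp (g := fun j => (i, j)) (fun a b hab => by simpa using hab)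
    · exact measurable_pi_iff.mpr fun a => measurable_pi_iff.mpr fun b => hX.meas a.1 b
    · let S : Finset (Fin n × Fin d) := Finset.univ.filter (fun p => p.1 ≠ i)
      let T : Finset (Fin n × Fin d) := Finset.univ.filter (fun p => p.1 = i)
      have hST : Disjoint S T := by
        rw [Finset.disjoint_left]; intro p hp hp'
        simp only [S, T, Finset.mem_filter, Finset.mem_univ, true_and] at hp hp'
        exact hp hp'
      have hind := hX.indep.indepFun_finset S T hST (fun p => hX.meas p.1 p.2)
      exact hind.comp 
        (φ := fun (f : S → ℝ) (a : {j : Fin n // j ≠ i}) (b : Fin d) => f ⟨(a.1, b), by simp [S, a.2]⟩)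
        (ψ := fun (f : T → ℝ) (b : Fin d) => f ⟨(i, b), by simp [T]⟩)
        (by fun_prop) (by fun_prop)
  refine (measure_mono (t := E ∪ ⋃ i, F i) ?_).trans ?_
  · intro ω hω
    by_contra hcon
    simp only [Set.mem_union, Set.mem_iUnion, not_or, not_exists] at hcon
    obtain ⟨hnE, hnF⟩ := hcon
    simp only [E, Set.mem_ofPred_eq, not_not] at hnE
    apply hω
    intro i _
    have hq := rowDel_quad (X ω) i (d:ℝ) (4 * (δ * d)) hnE
    have hdb := det_bound (rowDel (X ω) i) (d:ℝ) (4 * (δ * d)) hd' (by positivity) (by nlinarith) hq (vecDel y i)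
    refine ⟨hdb.1, ?_⟩
    have hyi : |y i| = 1 := by rcases hy i with h | h <;> simp [h]
    rw [abs_mul, hyi, one_mul, form_eq]
    have hVs : V i (Z i ω) ⬝ᵥ V i (Z i ω) ≤ s := by
      refine le_trans hdb.2 (le_trans ?_ hs2)
      have hyy : vecDel y i ⬝ᵥ vecDel y i ≤ n := by
        have : ∀ j, vecDel y i j * vecDel y i j = 1 := by
          intro j; rcases hy j.1 with h | h <;> simp [vecDel, h]
        simp only [dotProduct, this]
        simp
      calc 6 * (4 * (δ * d))^2 / (d:ℝ)^3 * (vecDel y i ⬝ᵥ vecDel y i) 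
          ≤ 6 * (4 * (δ * d))^2 / (d:ℝ)^3 * n := by gcongr
        _ = _ := by field_simp; ring
    have := hnF i
    simp only [F, Set.mem_ofPred_eq, not_and_or, not_lt] at this
    rcases this with h | h
    · exact h
    · exact absurd hVs h
  · refine (measure_union_le _ _).trans ?_
    rw [ENNReal.ofReal_add (by positivity) (by positivity)]
    refine add_le_add hE ?_
    calc μ (⋃ i, F i) ≤ ∑ i, μ (F i) := measure_iUnion_fintype_le _ _
      _ ≤ ∑ i : Fin n, ENNReal.ofReal (2 * Real.exp (-(t^2 / (2 * s)))) := Finset.sum_le_sum fun i _ => hF i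
      _ = _ := by
        rw [Finset.sum_const, nsmul_eq_mul, ENNReal.ofReal_mul (p := (n : ℝ)) (Nat.cast_nonneg _), ENNReal.ofReal_natCast]; simp

/-- First claim of Lemma 5 (asymptotic-lb1): below the threshold `d = ⌈(2−ε) n ln n⌉`, with
probability at least `1 − 1/n`, all leave-one-out Gram matrices `K₋ᵢ`, `i ∈ [m]`, are
invertible and `max_{i ∈ [m]} |yᵢ y₋ᵢᵀ (K₋ᵢ⁻¹ − d⁻¹ I) X₋ᵢ xᵢ| ≤ ε/(2C₀)`,
where `m = ⌊n / ln n⌋`. -/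
theorem stmt13 :
    ∀ C₀ > (0 : ℝ), ∀ c₁ : ℝ, 0 < c₁ → c₁ < 2 →
    ∃ C₂ > (0 : ℝ), ∃ n₀ : ℕ, ∀ n ≥ n₀, ∀ ε : ℝ,
      C₂ / Real.sqrt (Real.log n) ≤ ε → ε ≤ 2 - c₁ →
      ∀ (Ω : Type*) (_ : MeasurableSpace Ω) (μ : Measure Ω), IsProbabilityMeasure μ →
      ∀ (X : Ω → Matrix (Fin n) (Fin ⌈(2 - ε) * n * Real.log n⌉₊) ℝ) (y : Fin n → ℝ),
        (∀ i, y i = 1 ∨ y i = -1) → IsGaussSample μ X →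
        ENNReal.ofReal (1 - 1 / n) ≤
          μ {ω | ∀ i : Fin n, (i : ℕ) < ⌊(n : ℝ) / Real.log n⌋₊ →
              IsUnit (rowDel (X ω) i * (rowDel (X ω) i)ᵀ).det ∧
              |y i * (vecDel y i ⬝ᵥ
                (((rowDel (X ω) i * (rowDel (X ω) i)ᵀ)⁻¹ -
                    ((⌈(2 - ε) * n * Real.log n⌉₊ : ℝ))⁻¹ • 1) *ᵥ
                  (rowDel (X ω) i *ᵥ X ω i)))| ≤ ε / (2 * C₀)} := by
  intro C₀ hC₀ c₁ hc₁ _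
  refine ⟨384 * C₀ / c₁, by positivity, ?_⟩
  have hlim : Filter.Tendsto (fun n : ℕ => Real.log n) Filter.atTop Filter.atTop :=
    Real.tendsto_log_atTop.comp tendsto_natCast_atTop_atTop
  obtain ⟨n₁, hn₁⟩ := Filter.eventually_atTop.mp (hlim.eventually_ge_atTop (4096 / c₁))
  refine ⟨max n₁ 6, ?_⟩
  intro n hn ε hε1 hε2 Ω _ μ _
  have hn6 : 6 ≤ n := (le_max_right _ _).trans hn
  have hn6' : (6:ℝ) ≤ n := by exact_mod_cast hn6
  have hl := hn₁ n ((le_max_left _ _).trans hn)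
  set ℓ := Real.log n with hℓ
  have hlpos : 0 < ℓ := lt_of_lt_of_le (by positivity) hl
  have hcl : 4096 ≤ c₁ * ℓ := by rw [div_le_iff₀ hc₁] at hl; linarith
  have hdle : c₁ * n * ℓ ≤ (⌈(2 - ε) * n * ℓ⌉₊ : ℝ) := by
    refine le_trans ?_ (Nat.le_ceil _)
    gcongr
    linarith
  generalize ⌈(2 - ε) * n * ℓ⌉₊ = d at hdle ⊢
  intro X y hy hX
  have hnpos : (0:ℝ) < n := by linarith
  have hd' : (0:ℝ) < d := lt_of_lt_of_le (by positivity) hdle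
  have hd : 0 < d := by exact_mod_cast hd'
  have hnd : (n:ℝ) / d ≤ 1 / (c₁ * ℓ) := by
    rw [div_le_div_iff₀ hd' (by positivity)]; linarith
  have hεpos : 0 < ε := lt_of_lt_of_le (by positivity) hε1
  set δ := 8 * √((n:ℝ)/d) with hδ
  have hδ2 : δ^2 = 64 * (n / d) := by
    rw [hδ, mul_pow, Real.sq_sqrt (by positivity)]; norm_num
  have hδ0 : 0 < δ := by positivity
  have hδ1 : δ ≤ 1/8 := by
    have : (n:ℝ)/d ≤ (1/64)^2 := hnd.trans (by
      rw [div_le_iff₀ (by positivity)]; linarith)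
    have := Real.sqrt_le_iff.mpr ⟨by norm_num, this⟩
    rw [hδ]; linarith
  set s := 6144 / (c₁ * ℓ)^2 with hs
  have hs0 : 0 < s := by positivity
  have hs2 : 96 * δ^2 * n / d ≤ s := by
    have h1 : ((n:ℝ)/d)^2 ≤ (1/(c₁*ℓ))^2 := by gcongr
    calc 96 * δ^2 * n / d = 6144 * ((n:ℝ)/d)^2 := by rw [hδ2]; ring
      _ ≤ 6144 * (1/(c₁*ℓ))^2 := by gcongr
      _ = s := by rw [hs]; ring
  set t := ε / (2 * C₀) with ht
  have ht0 : 0 < t := by positivity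
  have hmain := core μ X hX y hy hd δ s t hδ0 hδ1 hs0 hs2 ht0 ⌊(n : ℝ) / ℓ⌋₊
  have hA : (512:ℝ) ^ n * (2 * Real.exp (-(δ^2 * d / 8))) ≤ 1 / (2 * n) := by
    have e1 : δ^2 * d / 8 = 8 * n := by rw [hδ2]; field_simp; norm_num
    rw [e1]
    have h512 : (512:ℝ) ≤ Real.exp 7 := by
      have h2 : (2.5:ℝ) ≤ Real.exp 1 := by linarith [Real.exp_one_gt_d9]
      calc (512:ℝ) ≤ 2.5 ^ 7 := by norm_num
        _ ≤ (Real.exp 1)^7 := by gcongr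
        _ = Real.exp 7 := by rw [← Real.exp_nat_mul]; norm_num
    have h3 : (512:ℝ)^n ≤ Real.exp (7 * n) := by
      calc (512:ℝ)^n ≤ (Real.exp 7)^n := by gcongr
        _ = _ := by rw [← Real.exp_nat_mul]; ring_nf
    have h4 : (512:ℝ) ^ n * (2 * Real.exp (-(8 * n))) ≤ 2 * Real.exp (-n) := by
      calc (512:ℝ) ^ n * (2 * Real.exp (-(8 * n))) ≤ Real.exp (7 * n) * (2 * Real.exp (-(8 * n))) := by gcongr
        _ = 2 * (Real.exp (7 * n) * Real.exp (-(8 * n))) := by ring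
        _ = _ := by rw [← Real.exp_add]; ring_nf
    have h5 : 4 * (n:ℝ) ≤ Real.exp n := by
      have := Real.quadratic_le_exp_of_nonneg hnpos.le
      nlinarith
    refine h4.trans ?_
    rw [Real.exp_neg, ← div_eq_mul_inv, div_le_div_iff₀ (Real.exp_pos _) (by positivity)]
    linarith
  have hB : (n:ℝ) * (2 * Real.exp (-(t^2 / (2 * s)))) ≤ 1 / (2 * n) := by
    have h1 : 3 * ℓ ≤ t^2 / (2 * s) := by
      have h2 : 384 / (2 * c₁ * √ℓ) ≤ t := by
        rw [ht, le_div_iff₀ (by positivity)]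
        refine le_trans (le_of_eq ?_) hε1
        field_simp
      have h3 : (384 / (2 * c₁ * √ℓ))^2 ≤ t^2 := by gcongr
      rw [le_div_iff₀ (by positivity)]
      refine le_trans (le_of_eq ?_) h3
      rw [hs, div_pow, mul_pow (2 * c₁), Real.sq_sqrt hlpos.le]
      field_simp
      norm_num
    have h4 : Real.exp (-(t^2 / (2 * s))) ≤ 1 / (n:ℝ)^3 := by
      calc Real.exp (-(t^2 / (2 * s))) ≤ Real.exp (-(3 * ℓ)) := Real.exp_le_exp.mpr (by linarith)
        _ = 1 / (n:ℝ)^3 := by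
          rw [Real.exp_neg, one_div]
          congr 1
          have : (3:ℝ) * ℓ = ((3:ℕ):ℝ) * ℓ := by norm_num
          rw [this, Real.exp_nat_mul, hℓ, Real.exp_log hnpos]
    calc (n:ℝ) * (2 * Real.exp (-(t^2 / (2 * s)))) ≤ n * (2 * (1 / (n:ℝ)^3)) := by gcongr
      _ = 2 / (n:ℝ)^2 := by field_simp
      _ ≤ _ := by
        rw [div_le_div_iff₀ (by positivity) (by positivity)]
        nlinarith
  have hAB := hmain.trans (ENNReal.ofReal_le_ofReal (add_le_add hA hB))
  rw [show 1 / (2 * (n:ℝ)) + 1 / (2 * n) = 1 / n by field_simp; norm_num] at hAB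
  rw [ENNReal.ofReal_sub _ (by positivity), ENNReal.ofReal_one, tsub_le_iff_right]
  refine le_trans ?_ (add_le_add_right hAB _)
  rw [← measure_univ (μ := μ)]
  exact measure_univ_le_add_compl _

end
end

section
/- For any C₀ > 0 and c₁ ∈ (0, 2) there exist C₂ > 0 and n₀ > 0 such that for all n ≥ n₀ and all ε with C₂/√(log n) ≤ ε ≤ 2 − c₁, the following holds with d = ⌈(2 − ε) n ln n⌉ and m = ⌊n / ln n⌋. Let (X, y) be an isotropic Gaussian sample of size n in dimension d with rows x₁,…,xₙ. Then with probability at least 1 − 1/n, max_{i ∈ [m]} | (1/d) y_i y_{[m]∖i}ᵀ X_{[m]∖i} x_i | ≤ ε / (2 C₀), where X_{[m]∖i} ∈ ℝ^{(m−1)×d} and y_{[m]∖i} ∈ ℝ^{m−1} consist of the first m rows/entries of X and y with the i-th removed. -/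
open MeasureTheory ProbabilityTheory Matrix

noncomputable section

lemma gauss_exp_lin (t : ℝ) :
    ∫⁻ x, ENNReal.ofReal (Real.exp (t * x)) ∂(gaussianReal 0 1) =
      ENNReal.ofReal (Real.exp (t ^ 2 / 2)) := by
  rw [← ofReal_integral_eq_lintegral_ofReal (integrable_exp_mul_gaussianReal t)
    (ae_of_all _ fun x => (Real.exp_pos _).le)]
  have := congrFun (mgf_fun_id_gaussianReal (μ := 0) (v := 1)) t
  simp only [mgf] at this
  rw [this]
  simp

lemma gauss_exp_sq (s : ℝ) (hs : 0 ≤ s) (hs' : s ≤ 1 / 2) :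
    ∫⁻ x, ENNReal.ofReal (Real.exp (s * x ^ 2 / 2)) ∂(gaussianReal 0 1) ≤
      ENNReal.ofReal (Real.exp s) := by
  rw [gaussianReal_of_var_ne_zero _ one_ne_zero,
    lintegral_withDensity_eq_lintegral_mul _ (measurable_gaussianPDF _ _) (by fun_prop)]
  have hb : 0 < (1 - s) / 2 := by linarith
  have h1 : ∀ x : ℝ, (gaussianPDF 0 1 * fun x => ENNReal.ofReal (Real.exp (s * x ^ 2 / 2))) x
      = ENNReal.ofReal ((√(2 * Real.pi))⁻¹ * Real.exp (-((1 - s) / 2) * x ^ 2)) := by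
    intro x
    simp only [Pi.mul_apply, gaussianPDF, gaussianPDFReal]
    rw [← ENNReal.ofReal_mul (by positivity), mul_assoc, ← Real.exp_add]
    congr 3
    · simp
    · simp; ring
  rw [lintegral_congr h1, ← ofReal_integral_eq_lintegral_ofReal
    ((integrable_exp_neg_mul_sq hb).const_mul _) (ae_of_all _ fun x => by positivity)]
  apply ENNReal.ofReal_le_ofReal
  rw [integral_const_mul, integral_gaussian, ← Real.sqrt_inv, ← Real.sqrt_mul (by positivity)]
  apply Real.sqrt_le_iff.2 ⟨(Real.exp_pos _).le, ?_⟩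
  have h2 : (2 * Real.pi)⁻¹ * (Real.pi / ((1 - s) / 2)) = 1 / (1 - s) := by
    have : 1 - s ≠ 0 := by linarith
    field_simp
  rw [h2, div_le_iff₀ (by linarith)]
  have h3 := Real.add_one_le_exp s
  have h4 : (s + 1) ^ 2 ≤ Real.exp s ^ 2 := by gcongr
  nlinarith [mul_nonneg hs hs, mul_nonneg hs (sub_nonneg.2 hs')]

lemma lint_bound {Ω : Type*} [MeasurableSpace Ω] {μ : Measure Ω} [IsProbabilityMeasure μ]
    {n d : ℕ} {X : Ω → Matrix (Fin n) (Fin d) ℝ} (hX : IsGaussSample μ X)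
    (y : Fin n → ℝ) (hy : ∀ i, y i = 1 ∨ y i = -1) (i : Fin n) (J : Finset (Fin n)) (hi : i ∉ J)
    (t M : ℝ) (hM : (J.card : ℝ) ≤ M) (htM : t ^ 2 * M ≤ 1 / 2) :
    ∫⁻ ω, ENNReal.ofReal (Real.exp (t * ∑ j ∈ J, y j * (X ω j ⬝ᵥ X ω i))) ∂μ ≤
      ENNReal.ofReal (Real.exp (d * (t ^ 2 * M))) := by
  classical
  set S : Finset (Fin n × Fin d) := J ×ˢ Finset.univ with hS
  set T : Finset (Fin n × Fin d) := {i} ×ˢ Finset.univ with hT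
  have hST : Disjoint S T := by
    rw [Finset.disjoint_left]
    rintro ⟨a, b⟩ h1 h2
    simp [hS, hT] at h1 h2
    exact hi (h2 ▸ h1)
  have hmeas : ∀ p : Fin n × Fin d, Measurable fun ω => X ω p.1 p.2 := fun p => hX.meas _ _
  have hind := hX.indep.indepFun_finset S T hST hmeas
  have hmem : ∀ k : Fin d, (i, k) ∈ T := by simp [hT]
  have hind2 : IndepFun (fun ω (p : S) => X ω p.1.1 p.1.2) (fun ω (k : Fin d) => X ω i k) μ :=
    hind.comp (φ := id) (ψ := fun (q : T → ℝ) (k : Fin d) => q ⟨(i, k), hmem k⟩)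
      measurable_id (by fun_prop)
  have hmW : Measurable (fun ω (p : S) => X ω p.1.1 p.1.2) :=
    measurable_pi_lambda _ fun p => hmeas p.1
  have hmV : Measurable (fun ω (k : Fin d) => X ω i k) :=
    measurable_pi_lambda _ fun k => hX.meas i k
  have hmap := hind2.map_prod_eq_prod_map_map hmW.aemeasurable hmV.aemeasurable
  let F : (S → ℝ) × (Fin d → ℝ) → ENNReal := fun z =>
    ENNReal.ofReal (Real.exp (∑ p : S, t * y p.1.1 * z.2 p.1.2 * z.1 p))
  have hF : Measurable F := by fun_prop
  have e1 : ∀ ω, ENNReal.ofReal (Real.exp (t * ∑ j ∈ J, y j * (X ω j ⬝ᵥ X ω i))) =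
      F (fun (p : S) => X ω p.1.1 p.1.2, fun (k : Fin d) => X ω i k) := by
    intro ω
    simp only [F]
    congr 2
    rw [Finset.sum_coe_sort S (fun p => t * y p.1 * X ω i p.2 * X ω p.1 p.2), hS,
      Finset.sum_product, Finset.mul_sum]
    refine Finset.sum_congr rfl fun j _ => ?_
    simp only [dotProduct, Finset.mul_sum]
    refine Finset.sum_congr rfl fun k _ => ?_
    ring
  have inner : ∀ v : Fin d → ℝ,
      ∫⁻ ω, F (fun (p : S) => X ω p.1.1 p.1.2, v) ∂μ =
        ∏ k, ENNReal.ofReal (Real.exp ((t ^ 2 * J.card) * v k ^ 2 / 2)) := by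
    intro v
    have e2 : ∀ ω, F (fun (p : S) => X ω p.1.1 p.1.2, v) =
        ∏ p ∈ S, ENNReal.ofReal (Real.exp (t * y p.1 * v p.2 * X ω p.1 p.2)) := by
      intro ω
      simp only [F]
      rw [Finset.sum_coe_sort S (fun p => t * y p.1 * v p.2 * X ω p.1 p.2), Real.exp_sum,
        ENNReal.ofReal_prod_of_nonneg fun _ _ => (Real.exp_pos _).le]
    rw [lintegral_congr e2]
    rw [lintegral_prod_eq_prod_lintegral_of_indepFun S
      (fun p ω => ENNReal.ofReal (Real.exp (t * y p.1 * v p.2 * X ω p.1 p.2)))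
      (hX.indep.comp (fun p x => ENNReal.ofReal (Real.exp (t * y p.1 * v p.2 * x)))
        (fun p => by fun_prop))
      (fun p => by have := hmeas p; fun_prop)]
    have e3 : ∀ p : Fin n × Fin d,
        ∫⁻ ω, ENNReal.ofReal (Real.exp (t * y p.1 * v p.2 * X ω p.1 p.2)) ∂μ =
          ENNReal.ofReal (Real.exp (t ^ 2 * v p.2 ^ 2 / 2)) := by
      intro p
      rw [← lintegral_map (f := fun x => ENNReal.ofReal (Real.exp (t * y p.1 * v p.2 * x)))
        (by fun_prop) (hmeas p), hX.law, gauss_exp_lin]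
      congr 3
      have : y p.1 ^ 2 = 1 := by rcases hy p.1 with h | h <;> simp [h]
      rw [mul_pow, mul_pow, this, mul_one]
    rw [Finset.prod_congr rfl fun p _ => e3 p, hS, Finset.prod_product_right]
    refine Finset.prod_congr rfl fun k _ => ?_
    simp only []
    rw [Finset.prod_const, ← ENNReal.ofReal_pow (Real.exp_pos _).le, ← Real.exp_nat_mul]
    congr 2
    ring
  rw [lintegral_congr e1, ← lintegral_map (f := F) hF (hmW.prodMk hmV), hmap,
    lintegral_prod_symm' _ hF, lintegral_map (hF.lintegral_prod_left') hmV]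
  have e4 : ∀ ω, ∫⁻ w, F (w, fun k => X ω i k) ∂(μ.map (fun ω (p : S) => X ω p.1.1 p.1.2)) =
      ∏ k, ENNReal.ofReal (Real.exp ((t ^ 2 * J.card) * X ω i k ^ 2 / 2)) := by
    intro ω
    rw [lintegral_map (by fun_prop) hmW, inner]
  rw [lintegral_congr e4]
  rw [lintegral_prod_eq_prod_lintegral_of_indepFun Finset.univ
      (fun k ω => ENNReal.ofReal (Real.exp ((t ^ 2 * J.card) * X ω i k ^ 2 / 2)))
      ((hX.indep.precomp (g := fun k : Fin d => (i, k)) (fun a b h => by simpa using h)).comp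
        (fun k x => ENNReal.ofReal (Real.exp ((t ^ 2 * J.card) * x ^ 2 / 2)))
        (fun p => by fun_prop))
      (fun k => by have := hX.meas i k; fun_prop)]
  have hle : t ^ 2 * J.card ≤ t ^ 2 * M := by gcongr
  have e5 : ∀ k : Fin d, ∫⁻ ω, ENNReal.ofReal (Real.exp ((t ^ 2 * J.card) * X ω i k ^ 2 / 2)) ∂μ
      ≤ ENNReal.ofReal (Real.exp (t ^ 2 * M)) := by
    intro k
    rw [← lintegral_map (f := fun x => ENNReal.ofReal (Real.exp ((t ^ 2 * J.card) * x ^ 2 / 2)))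
        (by fun_prop) (hX.meas i k), hX.law]
    refine (gauss_exp_sq _ (by positivity) (hle.trans htM)).trans ?_
    gcongr
  refine (Finset.prod_le_prod' fun k _ => e5 k).trans ?_
  rw [Finset.prod_const, ← ENNReal.ofReal_pow (Real.exp_pos _).le, ← Real.exp_nat_mul]
  simp

lemma tail_one {Ω : Type*} [MeasurableSpace Ω] {μ : Measure Ω} {Z : Ω → ℝ} (hZ : Measurable Z)
    (t a B : ℝ) (ht : 0 ≤ t)
    (h : ∫⁻ ω, ENNReal.ofReal (Real.exp (t * Z ω)) ∂μ ≤ ENNReal.ofReal (Real.exp B)) :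
    μ {ω | a ≤ Z ω} ≤ ENNReal.ofReal (Real.exp (B - t * a)) := by
  have h1 : μ {ω | a ≤ Z ω} ≤
      μ {ω | ENNReal.ofReal (Real.exp (t * a)) ≤ ENNReal.ofReal (Real.exp (t * Z ω))} := by
    apply measure_mono
    intro ω hω
    simp only [Set.mem_ofPred_eq] at hω ⊢
    gcongr
  have h2 := mul_meas_ge_le_lintegral (μ := μ)
    (f := fun ω => ENNReal.ofReal (Real.exp (t * Z ω))) (by fun_prop)
    (ENNReal.ofReal (Real.exp (t * a)))
  refine h1.trans ?_
  rw [Real.exp_sub, ENNReal.ofReal_div_of_pos (Real.exp_pos _),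
    ENNReal.le_div_iff_mul_le (by simp [Real.exp_pos]) (by simp), mul_comm]
  exact h2.trans h

lemma tail_two {Ω : Type*} [MeasurableSpace Ω] {μ : Measure Ω} [IsProbabilityMeasure μ]
    {n d : ℕ} {X : Ω → Matrix (Fin n) (Fin d) ℝ} (hX : IsGaussSample μ X)
    (y : Fin n → ℝ) (hy : ∀ i, y i = 1 ∨ y i = -1) (i : Fin n) (J : Finset (Fin n)) (hi : i ∉ J)
    (t M a : ℝ) (ht : 0 ≤ t) (hM : (J.card : ℝ) ≤ M) (htM : t ^ 2 * M ≤ 1 / 2) :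
    μ {ω | a ≤ |∑ j ∈ J, y j * (X ω j ⬝ᵥ X ω i)|} ≤
      ENNReal.ofReal (2 * Real.exp (d * (t ^ 2 * M) - t * a)) := by
  have hm : Measurable fun ω => ∑ j ∈ J, y j * (X ω j ⬝ᵥ X ω i) := by
    have := hX.meas
    simp only [dotProduct]
    fun_prop
  have b1 := lint_bound hX y hy i J hi t M hM htM
  have b2 := lint_bound hX y hy i J hi (-t) M hM (by simpa using htM)
  have c1 := tail_one hm t a _ ht b1
  have c2 := tail_one (μ := μ) hm.neg t a (d * (t ^ 2 * M)) ht (by simpa using b2)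
  calc _ ≤ μ ({ω | a ≤ ∑ j ∈ J, y j * (X ω j ⬝ᵥ X ω i)} ∪
        {ω | a ≤ -∑ j ∈ J, y j * (X ω j ⬝ᵥ X ω i)}) := by
        apply measure_mono
        intro ω hω
        simp only [Set.mem_ofPred_eq, Set.mem_union] at hω ⊢
        exact le_abs.1 hω
    _ ≤ _ := measure_union_le _ _
    _ ≤ _ := add_le_add c1 c2
    _ = _ := by rw [← ENNReal.ofReal_add (by positivity) (by positivity)]; ring_nf

lemma num_bound (C₀ c₁ ε L N d M : ℝ) (hC : 0 < C₀) (hc : 0 < c₁) (hL : 0 < L) (hN : 0 < N)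
    (hM : M = N / L) (hd : c₁ * N * L ≤ d) (hε : 48 * C₀ ^ 2 / c₁ / L ≤ ε ^ 2) :
    d * ((ε / (4 * C₀ * M)) ^ 2 * M) - ε / (4 * C₀ * M) * (d * (ε / (2 * C₀))) ≤ -(3 * L) := by
  have hM0 : 0 < M := by rw [hM]; positivity
  have e : d * ((ε / (4 * C₀ * M)) ^ 2 * M) - ε / (4 * C₀ * M) * (d * (ε / (2 * C₀)))
      = - (d * ε ^ 2 / (16 * C₀ ^ 2 * M)) := by
    field_simp
    ring
  rw [e, neg_le_neg_iff, le_div_iff₀ (by positivity)]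
  have hd0 : 0 ≤ d := le_trans (by positivity) hd
  have h1 : c₁ * N * L * (48 * C₀ ^ 2 / c₁ / L) ≤ d * ε ^ 2 := by gcongr
  refine le_trans (le_of_eq ?_) h1
  rw [hM]
  field_simp
  ring

/-- Second claim of Lemma 5 (asymptotic-lb1): below the threshold `d = ⌈(2−ε) n ln n⌉`, with
probability at least `1 − 1/n`, `max_{i ∈ [m]} |d⁻¹ yᵢ y_{[m]∖i}ᵀ X_{[m]∖i} xᵢ| ≤ ε/(2C₀)`,
where `m = ⌊n / ln n⌋` and `y_{[m]∖i}ᵀ X_{[m]∖i} xᵢ = ∑_{j < m, j ≠ i} yⱼ ⟨xⱼ, xᵢ⟩`. -/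
theorem stmt14 :
    ∀ C₀ > (0 : ℝ), ∀ c₁ : ℝ, 0 < c₁ → c₁ < 2 →
    ∃ C₂ > (0 : ℝ), ∃ n₀ : ℕ, ∀ n ≥ n₀, ∀ ε : ℝ,
      C₂ / Real.sqrt (Real.log n) ≤ ε → ε ≤ 2 - c₁ →
      ∀ (Ω : Type*) (_ : MeasurableSpace Ω) (μ : Measure Ω), IsProbabilityMeasure μ →
      ∀ (X : Ω → Matrix (Fin n) (Fin ⌈(2 - ε) * n * Real.log n⌉₊) ℝ) (y : Fin n → ℝ),
        (∀ i, y i = 1 ∨ y i = -1) → IsGaussSample μ X →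
        ENNReal.ofReal (1 - 1 / n) ≤
          μ {ω | ∀ i : Fin n, (i : ℕ) < ⌊(n : ℝ) / Real.log n⌋₊ →
              |((⌈(2 - ε) * n * Real.log n⌉₊ : ℝ))⁻¹ *
                (y i * ∑ j ∈ Finset.univ.filter
                    (fun j : Fin n => (j : ℕ) < ⌊(n : ℝ) / Real.log n⌋₊ ∧ j ≠ i),
                  y j * (X ω j ⬝ᵥ X ω i))| ≤ ε / (2 * C₀)} := by
  intro C₀ hC c₁ hc hc2
  refine ⟨√(48 * C₀ ^ 2 / c₁), by positivity, max 3 ⌈(1 / C₀ ^ 2) ^ 2⌉₊, ?_⟩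
  intro n hn ε hε hε2 Ω _ μ hμ
  have hn3 : 3 ≤ n := le_trans (le_max_left _ _) hn
  have hnC : (1 / C₀ ^ 2) ^ 2 ≤ (n : ℝ) :=
    (Nat.le_ceil _).trans (by exact_mod_cast le_trans (le_max_right _ _) hn)
  have hn3' : (3 : ℝ) ≤ n := by exact_mod_cast hn3
  have hn0 : (0 : ℝ) < n := by linarith
  set L := Real.log n with hL
  have hL0 : 0 < L := Real.log_pos (by linarith)
  set d := ⌈(2 - ε) * n * L⌉₊ with hd
  set m := ⌊(n : ℝ) / L⌋₊ with hm
  have hε0 : 0 < ε := lt_of_lt_of_le (by positivity) hε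
  have hd1 : c₁ * n * L ≤ d := by
    refine le_trans ?_ (Nat.le_ceil _)
    gcongr
    linarith
  have hd0 : (0 : ℝ) < d := lt_of_lt_of_le (by positivity) hd1
  set M := (n : ℝ) / L with hM
  have hM0 : 0 < M := by positivity
  have hεsq : 48 * C₀ ^ 2 / c₁ / L ≤ ε ^ 2 := by
    have : (√(48 * C₀ ^ 2 / c₁) / √L) ^ 2 ≤ ε ^ 2 := by gcongr
    rwa [div_pow, Real.sq_sqrt (by positivity), Real.sq_sqrt hL0.le] at this
  have hMbig : 1 / (2 * C₀ ^ 2) ≤ M := by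
    have hs : 1 / C₀ ^ 2 ≤ √n := Real.le_sqrt_of_sq_le hnC
    have hs0 : 0 < √(n : ℝ) := Real.sqrt_pos.2 hn0
    have hlog : L ≤ 2 * √n := by
      have h1 := Real.log_le_sub_one_of_pos hs0
      rw [Real.log_sqrt hn0.le] at h1
      linarith
    rw [hM, le_div_iff₀ hL0]
    have hsq := Real.sq_sqrt hn0.le
    calc 1 / (2 * C₀ ^ 2) * L = (1 / C₀ ^ 2) * (L / 2) := by field_simp
      _ ≤ √n * √n := by gcongr; linarith
      _ = n := by nlinarith
  set t := ε / (4 * C₀ * M) with ht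
  have htM : t ^ 2 * M ≤ 1 / 2 := by
    have e : t ^ 2 * M = ε ^ 2 / (16 * C₀ ^ 2 * M) := by rw [ht]; field_simp; ring
    rw [e, div_le_iff₀ (by positivity)]
    rw [div_le_iff₀ (by positivity)] at hMbig
    have : ε ^ 2 ≤ 2 ^ 2 := by gcongr; linarith
    nlinarith
  intro X y hy hX
  have hexp := num_bound C₀ c₁ ε L n d M hC hc hL0 hn0 hM hd1 hεsq
  set G := {ω | ∀ i : Fin n, (i : ℕ) < m → |(d : ℝ)⁻¹ * (y i * ∑ j ∈ Finset.univ.filter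
      (fun j : Fin n => (j : ℕ) < m ∧ j ≠ i), y j * (X ω j ⬝ᵥ X ω i))| ≤ ε / (2 * C₀)} with hG
  have hbad : μ Gᶜ ≤ ENNReal.ofReal (1 / n) := by
    have hsub : Gᶜ ⊆ ⋃ i : Fin n, {ω | d * (ε / (2 * C₀)) ≤ |∑ j ∈ Finset.univ.filter
        (fun j : Fin n => (j : ℕ) < m ∧ j ≠ i), y j * (X ω j ⬝ᵥ X ω i)|} := by
      intro ω hω
      simp only [hG, Set.mem_compl_iff, Set.mem_ofPred_eq, not_forall, not_le] at hω
      obtain ⟨i, _, h⟩ := hω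
      simp only [Set.mem_iUnion, Set.mem_ofPred_eq]
      refine ⟨i, ?_⟩
      have hyi : |y i| = 1 := by rcases hy i with h | h <;> simp [h]
      rw [abs_mul, abs_mul, hyi, one_mul, abs_of_pos (inv_pos.2 hd0),
        inv_mul_eq_div, lt_div_iff₀ hd0] at h
      linarith
    refine (measure_mono hsub).trans ((measure_iUnion_fintype_le _ _).trans ?_)
    have hi : ∀ i : Fin n, μ {ω | d * (ε / (2 * C₀)) ≤ |∑ j ∈ Finset.univ.filter
        (fun j : Fin n => (j : ℕ) < m ∧ j ≠ i), y j * (X ω j ⬝ᵥ X ω i)|} ≤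
        ENNReal.ofReal (2 * Real.exp (-(3 * L))) := by
      intro i
      have hcard : ((Finset.univ.filter
          (fun j : Fin n => (j : ℕ) < m ∧ j ≠ i)).card : ℝ) ≤ M := by
        refine le_trans ?_ (Nat.floor_le hM0.le)
        have : (Finset.univ.filter (fun j : Fin n => (j : ℕ) < m ∧ j ≠ i)).card ≤
            (Finset.range m).card :=
          Finset.card_le_card_of_injOn (fun j => j.val)
            (fun j hj => by simp at hj ⊢; exact hj.1) (fun a _ b _ h => Fin.ext h)
        rw [Finset.card_range] at this
        exact_mod_cast this
      refine (tail_two hX y hy i _ (by simp) t M (d * (ε / (2 * C₀))) (by positivity)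
        hcard htM).trans ?_
      gcongr
    refine (Finset.sum_le_sum fun i _ => hi i).trans ?_
    rw [Finset.sum_const, Finset.card_univ, Fintype.card_fin, nsmul_eq_mul,
      ← ENNReal.ofReal_natCast, ← ENNReal.ofReal_mul (by positivity)]
    apply ENNReal.ofReal_le_ofReal
    have hE : Real.exp (-(3 * L)) = 1 / (n : ℝ) ^ 3 := by
      rw [Real.exp_neg, one_div]
      congr 1
      have := Real.exp_nat_mul L 3
      rw [hL, Real.exp_log hn0] at this
      exact_mod_cast this
    rw [hE]
    have : (n : ℝ) * (2 * (1 / (n : ℝ) ^ 3)) = (2 / n) * (1 / n) := by field_simp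
    rw [this]
    have h2 : 2 / (n : ℝ) ≤ 1 := by rw [div_le_one hn0]; linarith
    have h3 : 0 ≤ 1 / (n : ℝ) := by positivity
    nlinarith
  have hone : 1 ≤ μ G + μ Gᶜ := by
    rw [← measure_univ (μ := μ), ← Set.union_compl_self G]
    exact measure_union_le _ _
  rw [ENNReal.ofReal_sub _ (by positivity), ENNReal.ofReal_one]
  exact tsub_le_iff_right.2 (hone.trans (by gcongr))

end
end

section
/- There exist C₂ > 0 and n₀ > 0 such that for all n ≥ n₀ and all ε ≥ C₂/√(log n), the following holds with d = ⌈(2 + ε) n ln n⌉. Let (X, y) be an isotropic Gaussian sample of size n in dimension d with rows x₁,…,xₙ. Then for each i ∈ [n], P[ K_{∖i} is invertible and y_i y_{∖i}ᵀ K_{∖i}⁻¹ X_{∖i} x_i ≥ 1 ] ≤ 1/(2n√(π log n)) + 1/n², where K_{∖i} = X_{∖i} X_{∖i}ᵀ and X_{∖i}, y_{∖i} denote X and y with the i-th row/entry removed. -/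
open MeasureTheory ProbabilityTheory Matrix

noncomputable section

lemma lin_law {Ω ι : Type*} [MeasurableSpace Ω] [Fintype ι] {μ : Measure Ω}
    {Z : ι → Ω → ℝ} (hm : ∀ i, Measurable (Z i)) (hi : iIndepFun Z μ)
    (hl : ∀ i, Measure.map (Z i) μ = gaussianReal 0 1) (a : ι → ℝ) :
    Measure.map (fun ω => ∑ i, a i * Z i ω) μ = gaussianReal 0 (Real.toNNReal (∑ i, a i ^ 2)) := by
  have := hi.isProbabilityMeasure
  have hi' : iIndepFun (fun i ω => a i * Z i ω) μ :=
    hi.comp (fun i x => a i * x) (fun i => by fun_prop)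
  have : IsProbabilityMeasure (Measure.map (fun ω => ∑ i, a i * Z i ω) μ) :=
    Measure.isProbabilityMeasure_map (by fun_prop)
  have hl' : ∀ i, Measure.map (fun ω => a i * Z i ω) μ = gaussianReal 0 (Real.toNNReal (a i ^ 2)) := by
    intro i
    have h1 : Measure.map (fun ω => a i * Z i ω) μ = Measure.map (fun x => a i * x) (Measure.map (Z i) μ) := by
      rw [Measure.map_map (by fun_prop) (hm i)]; rfl
    rw [h1, hl, gaussianReal_map_const_mul]
    congr 1
    · simp
    · ext; simp [sq_nonneg]
  apply Measure.ext_of_charFun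
  rw [hi'.charFun_map_fun_sum_eq_prod (fun i => by fun_prop)]
  ext t
  simp only [Finset.prod_apply, hl', charFun_gaussianReal]
  rw [← Complex.exp_sum]
  congr 1
  simp only [Complex.ofReal_zero, mul_zero, zero_mul, zero_sub, Finset.sum_neg_distrib]
  rw [← Finset.sum_div, ← Finset.sum_mul]
  congr 3
  rw [← Complex.ofReal_sum]
  congr 1
  rw [Real.coe_toNNReal _ (Finset.sum_nonneg (fun i _ => sq_nonneg _))]
  exact Finset.sum_congr rfl (fun i _ => Real.coe_toNNReal _ (sq_nonneg _))

lemma col_indep {Ω κ : Type*} [MeasurableSpace Ω] [Fintype κ] {d : ℕ} {μ : Measure Ω}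
    {A : Ω → Matrix κ (Fin d) ℝ} (hm : ∀ i j, Measurable fun ω => A ω i j)
    (hi : iIndepFun (fun (p : κ × Fin d) ω => A ω p.1 p.2) μ)
    (hl : ∀ i j, Measure.map (fun ω => A ω i j) μ = gaussianReal 0 1) (a : κ → ℝ) :
    iIndepFun (fun (j : Fin d) ω => ∑ k, a k * A ω k j) μ := by
  have := hi.isProbabilityMeasure
  have hg : ∀ p : κ × Fin d, HasGaussianLaw (fun ω => A ω p.1 p.2) μ := fun p =>
    ⟨by rw [hl]; infer_instance⟩
  have hG := iIndepFun.hasGaussianLaw hg hi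
  apply HasGaussianLaw.iIndepFun_of_covariance_eq_zero
  · let L : (κ × Fin d → ℝ) →L[ℝ] (Fin d → ℝ) := ContinuousLinearMap.pi fun j =>
      ∑ k, a k • ContinuousLinearMap.proj (R := ℝ) (φ := fun _ : κ × Fin d => ℝ) (k, j)
    have := hG.map_fun L
    refine this.congr (Filter.Eventually.of_forall fun ω => ?_)
    ext j
    simp [L]
  · intro i j hij
    have hL : ∀ k j, MemLp (fun ω => a k * A ω k j) 2 μ := fun k j =>
      (hg (k, j)).memLp_two.const_mul _
    rw [covariance_fun_sum_fun_sum (fun k => hL k i) (fun k => hL k j)]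
    refine Finset.sum_eq_zero fun k _ => Finset.sum_eq_zero fun l _ => ?_
    rw [covariance_const_mul_left, covariance_const_mul_right]
    have := (hi.indepFun (i := (k,i)) (j := (l,j)) (by simp [hij])).covariance_eq_zero
      (hg (k,i)).memLp_two (hg (l,j)).memLp_two
    simp at this
    rw [this]; simp

lemma exp_ineq {t : ℝ} (ht : |t| ≤ 1/4) : (√(1 - 2*t))⁻¹ ≤ Real.exp (t + 4 * t^2) := by
  have h := abs_le.1 ht
  have hp : 0 < 1 - 2*t := by linarith
  have h1 := Real.one_sub_inv_le_log_of_pos hp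
  have h2 : -2*t - 8*t^2 ≤ 1 - (1-2*t)⁻¹ := by
    have : 1 - (1-2*t)⁻¹ = -2*t/(1-2*t) := by field_simp; ring
    rw [this, le_div_iff₀ hp]
    nlinarith [sq_nonneg t, mul_nonneg (sq_nonneg t) (by linarith : 0 ≤ 1 - 4*t)]
  rw [inv_le_comm₀ (Real.sqrt_pos.2 hp) (Real.exp_pos _), ← Real.exp_neg]
  apply Real.le_sqrt_of_sq_le
  rw [← Real.exp_nat_mul, ← Real.le_log_iff_exp_le hp]
  push_cast; linarith

lemma sq_mgf_std {t : ℝ} (ht : |t| ≤ 1/4) :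
    Integrable (fun x => Real.exp (t * x^2)) (gaussianReal 0 1) ∧
    ∫ x, Real.exp (t * x^2) ∂(gaussianReal 0 1) ≤ Real.exp (t + 4 * t^2) := by
  have h := abs_le.1 ht
  have hp : 0 < 1/2 - t := by linarith
  have he : ∀ x, gaussianPDFReal 0 1 x * Real.exp (t * x^2) = (√(2*Real.pi))⁻¹ * Real.exp (-(1/2 - t) * x^2) := by
    intro x
    simp only [gaussianPDFReal, mul_assoc]
    rw [← Real.exp_add]
    have : -(x - 0) ^ 2 / (2 * ((1 : NNReal) : ℝ)) + t * x ^ 2 = -(1/2 - t) * x^2 := by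
      push_cast; ring
    rw [this]; simp
  constructor
  · rw [gaussianReal_of_var_ne_zero _ one_ne_zero, integrable_withDensity_iff_integrable_smul₀' (by fun_prop) (by simp [gaussianPDF])]
    simp only [toReal_gaussianPDF, smul_eq_mul, he]
    exact (integrable_exp_neg_mul_sq hp).const_mul _
  · rw [integral_gaussianReal_eq_integral_smul one_ne_zero]
    simp only [smul_eq_mul, he]
    rw [integral_const_mul, integral_gaussian]
    refine le_trans (le_of_eq ?_) (exp_ineq ht)
    rw [← Real.sqrt_inv, ← Real.sqrt_mul (by positivity), ← Real.sqrt_inv]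
    congr 1
    have : 1 - 2*t ≠ 0 := by linarith
    have := Real.pi_pos.ne'
    have := hp.ne'
    field_simp

lemma sq_mgf {Ω : Type*} [MeasurableSpace Ω] {μ : Measure Ω} {Y : Ω → ℝ} (hY : Measurable Y) {s t : ℝ} (hs : 0 ≤ s)
    (hl : Measure.map Y μ = gaussianReal 0 (Real.toNNReal s)) (ht : |t * s| ≤ 1/4) :
    Integrable (fun ω => Real.exp (t * Y ω^2)) μ ∧
    mgf (fun ω => Y ω ^ 2) μ t ≤ Real.exp (t * s + 4 * (t * s)^2) := by
  have hl2 : Measure.map Y μ = Measure.map (fun x => √s * x) (gaussianReal 0 1) := by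
    rw [hl, gaussianReal_map_const_mul]
    congr 1
    · simp
    · ext; simp [hs]
  have key := sq_mgf_std ht
  have e : ∀ x, Real.exp (t * (√s * x)^2) = Real.exp (t * s * x^2) := by
    intro x; rw [mul_pow, Real.sq_sqrt hs, mul_assoc]
  constructor
  · have : Integrable (fun x => Real.exp (t * x^2)) (Measure.map Y μ) := by
      rw [hl2, integrable_map_measure (by fun_prop) (by fun_prop)]
      simp only [Function.comp_def, e]; exact key.1
    exact (integrable_map_measure (f := Y) (g := fun x : ℝ => Real.exp (t * x^2)) (by fun_prop) (by fun_prop)).1 this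
  · have : mgf (fun ω => Y ω ^ 2) μ t = ∫ x, Real.exp (t * x^2) ∂(Measure.map Y μ) := by
      rw [integral_map (by fun_prop) (by fun_prop)]; rfl
    rw [this, hl2, integral_map (by fun_prop) (by fun_prop)]
    simp only [e]; exact key.2

lemma conc {Ω κ : Type*} [MeasurableSpace Ω] [Fintype κ] {d : ℕ} {μ : Measure Ω}
    {A : Ω → Matrix κ (Fin d) ℝ} (hm : ∀ i j, Measurable fun ω => A ω i j)
    (hi : iIndepFun (fun (p : κ × Fin d) ω => A ω p.1 p.2) μ)
    (hl : ∀ i j, Measure.map (fun ω => A ω i j) μ = gaussianReal 0 1) (a : κ → ℝ)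
    (ha : ∑ k, a k ^ 2 ≤ 4) {m : ℝ} (hm0 : 0 < m) (hd : 16 * m ≤ d) :
    μ.real {ω | 48 * √(m * d) ≤ |∑ j, (∑ k, a k * A ω k j) ^ 2 - d * ∑ k, a k ^ 2|}
      ≤ 2 * Real.exp (-8 * m) := by
  have := hi.isProbabilityMeasure
  set s := ∑ k, a k ^ 2 with hs
  have hs0 : 0 ≤ s := Finset.sum_nonneg fun _ _ => sq_nonneg _
  have hd0 : (0 : ℝ) < d := by linarith
  set Y : Fin d → Ω → ℝ := fun j ω => ∑ k, a k * A ω k j with hY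
  have hYm : ∀ j, Measurable (Y j) := fun j => by fun_prop
  have hYl : ∀ j, Measure.map (Y j) μ = gaussianReal 0 (Real.toNNReal s) := fun j =>
    lin_law (fun k => hm k j) (hi.precomp (g := fun k => (k, j)) (fun _ _ h => (Prod.ext_iff.1 h).1))
      (fun k => hl k j) a
  have hYi : iIndepFun Y μ := col_indep hm hi hl a
  have hY2 : iIndepFun (fun j ω => Y j ω ^ 2) μ := hYi.comp (fun _ x => x ^ 2) (fun _ => by fun_prop)
  have hYm2 : ∀ j, Measurable (fun ω => Y j ω ^ 2) := fun j => by fun_prop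
  set r := √(m / d) with hr
  have hr0 : 0 ≤ r := Real.sqrt_nonneg _
  have hr2 : r ^ 2 = m / d := Real.sq_sqrt (by positivity)
  have hdr : d * r ^ 2 = m := by rw [hr2]; field_simp
  have hr4 : r ≤ 1 / 4 := by
    apply Real.sqrt_le_iff.2
    refine ⟨by norm_num, ?_⟩
    rw [div_le_iff₀ hd0]; linarith
  have hS : √(m * d) = d * r := by
    rw [show m * d = (d * r) ^ 2 by rw [mul_pow, hr2]; field_simp]
    exact Real.sqrt_sq (by positivity)
  have hs2 : s ^ 2 ≤ 16 := by nlinarith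
  have main : ∀ t : ℝ, |t| = r / 4 →
      Integrable (fun ω => Real.exp (t * (∑ j, fun ω => Y j ω ^ 2) ω)) μ ∧
      mgf (∑ j, fun ω => Y j ω ^ 2) μ t ≤ Real.exp (t * (d * s) + 4 * m) := by
    intro t ht
    have hts : |t * s| ≤ 1/4 := by
      rw [abs_mul, ht, abs_of_nonneg hs0]; nlinarith
    have h1 := fun j => sq_mgf (hYm j) hs0 (hYl j) hts
    refine ⟨hY2.integrable_exp_mul_sum hYm2 (fun j _ => (h1 j).1), ?_⟩
    rw [hY2.mgf_sum hYm2]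
    refine (Finset.prod_le_prod (fun j _ => mgf_nonneg) (fun j _ => (h1 j).2)).trans ?_
    rw [Finset.prod_const, Finset.card_univ, Fintype.card_fin, ← Real.exp_nat_mul]
    apply Real.exp_le_exp.2
    have ht2 : t ^ 2 = r ^ 2 / 16 := by rw [← sq_abs, ht]; ring
    have : (d : ℝ) * (4 * (t * s) ^ 2) ≤ 4 * m := by
      rw [mul_pow, ht2, ← hdr]
      nlinarith [mul_nonneg hd0.le (sq_nonneg r)]
    nlinarith
  have hsub : {ω | 48 * √(m * d) ≤ |∑ j, (∑ k, a k * A ω k j) ^ 2 - d * s|} ⊆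
      {ω | d * s + 48 * √(m * d) ≤ (∑ j, fun ω => Y j ω ^ 2) ω} ∪
      {ω | (∑ j, fun ω => Y j ω ^ 2) ω ≤ d * s - 48 * √(m * d)} := by
    intro ω hω
    simp only [Set.mem_ofPred_eq, Set.mem_union, Finset.sum_apply, hY] at hω ⊢
    rcases le_abs.1 hω with h | h
    · left; linarith
    · right; linarith
  refine (measureReal_mono hsub).trans ((measureReal_union_le _ _).trans ?_)
  have hp := main (r / 4) (abs_of_nonneg (by positivity))
  have hn := main (-(r / 4)) (by rw [abs_neg]; exact abs_of_nonneg (by positivity))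
  have e1 := measure_ge_le_exp_mul_mgf (d * s + 48 * √(m * d)) (by positivity : 0 ≤ r / 4) hp.1
  have e2 := measure_le_le_exp_mul_mgf (d * s - 48 * √(m * d)) (by linarith : -(r / 4) ≤ 0) hn.1
  have f1 := e1.trans (mul_le_mul_of_nonneg_left hp.2 (Real.exp_pos _).le)
  have f2 := e2.trans (mul_le_mul_of_nonneg_left hn.2 (Real.exp_pos _).le)
  rw [← Real.exp_add] at f1 f2
  have g1 : -(r / 4) * (d * s + 48 * √(m * d)) + (r / 4 * (d * s) + 4 * m) = -8 * m := by
    rw [hS]; linear_combination (-12) * hdr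
  have g2 : -(-(r / 4)) * (d * s - 48 * √(m * d)) + (-(r / 4) * (d * s) + 4 * m) = -8 * m := by
    rw [hS]; linear_combination (-12) * hdr
  rw [g1] at f1
  rw [g2] at f2
  linarith

lemma exists_net (E : Type*) [NormedAddCommGroup E] [NormedSpace ℝ E] [FiniteDimensional ℝ E] :
    ∃ N : Finset E, N.card ≤ 5 ^ Module.finrank ℝ E ∧ (∀ p ∈ N, ‖p‖ ≤ 1) ∧
      ∀ x : E, ‖x‖ ≤ 1 → ∃ p ∈ N, ‖x - p‖ ≤ 1 / 2 := by
  classical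
  let P : ℕ → Prop := fun k => ∃ s : Finset E, s.card = k ∧ (∀ c ∈ s, ‖c‖ ≤ 2) ∧
    (∀ c ∈ s, ∀ d ∈ s, c ≠ d → 1 ≤ ‖c - d‖)
  have hP0 : P 0 := ⟨∅, by simp⟩
  obtain ⟨s, hsc, hs1, hs2⟩ := Nat.findGreatest_spec (P := P) (Nat.zero_le (5 ^ Module.finrank ℝ E)) hP0
  have hb := Besicovitch.card_le_of_separated s hs1 hs2
  refine ⟨s.image (fun x => (2⁻¹ : ℝ) • x), Finset.card_image_le.trans hb, ?_, ?_⟩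
  · intro p hp
    obtain ⟨c, hc, rfl⟩ := Finset.mem_image.1 hp
    rw [norm_smul]; norm_num; have := hs1 c hc; linarith
  · intro x hx
    by_contra! hcon
    have hfar : ∀ c ∈ s, 1 < ‖(2 : ℝ) • x - c‖ := by
      intro c hc
      have := hcon _ (Finset.mem_image_of_mem _ hc)
      have e : (2 : ℝ) • x - c = (2 : ℝ) • (x - (2⁻¹ : ℝ) • c) := by
        rw [smul_sub, smul_smul]; norm_num
      rw [e, norm_smul]; norm_num; linarith
    have hnot : (2 : ℝ) • x ∉ s := fun h => by
      have := hfar _ h; simp at this; linarith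
    have hs1' : ∀ c ∈ insert ((2 : ℝ) • x) s, ‖c‖ ≤ 2 := by
      intro c hc
      rcases Finset.mem_insert.1 hc with rfl | h
      · rw [norm_smul]; norm_num; linarith
      · exact hs1 c h
    have hs2' : ∀ c ∈ insert ((2 : ℝ) • x) s, ∀ d ∈ insert ((2 : ℝ) • x) s, c ≠ d → 1 ≤ ‖c - d‖ := by
      intro c hc e he hne
      rcases Finset.mem_insert.1 hc with rfl | h <;> rcases Finset.mem_insert.1 he with rfl | h'
      · exact absurd rfl hne
      · exact (hfar _ h').le
      · rw [norm_sub_rev]; exact (hfar _ h).le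
      · exact hs2 c h e h' hne
    have hb' := Besicovitch.card_le_of_separated _ hs1' hs2'
    have : P (s.card + 1) := ⟨_, Finset.card_insert_of_notMem hnot, hs1', hs2'⟩
    rw [Finset.card_insert_of_notMem hnot] at hb'
    have := Nat.le_findGreatest hb' this
    omega

lemma net_dual {E : Type*} [NormedAddCommGroup E] [InnerProductSpace ℝ E] {N : Finset E}
    (hN : ∀ x : E, ‖x‖ ≤ 1 → ∃ p ∈ N, ‖x - p‖ ≤ 1 / 2) (z : E) {M : ℝ}
    (h : ∀ q ∈ N, |inner ℝ z q| ≤ M) : ‖z‖ ≤ 2 * M := by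
  by_cases hz : z = 0
  · obtain ⟨p, hp, -⟩ := hN 0 (by simp)
    have := (abs_nonneg _).trans (h p hp)
    subst hz; simp; linarith
  have hz' : 0 < ‖z‖ := norm_pos_iff.2 hz
  obtain ⟨p, hp, hxp⟩ := hN (‖z‖⁻¹ • z) (by rw [norm_smul]; simp [hz'.ne'])
  have h1 : inner ℝ z (‖z‖⁻¹ • z) = ‖z‖ := by
    rw [real_inner_smul_right, real_inner_self_eq_norm_sq]; field_simp
  have h2 : inner ℝ z (‖z‖⁻¹ • z - p) ≤ ‖z‖ * (1 / 2) :=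
    (real_inner_le_norm _ _).trans (mul_le_mul_of_nonneg_left hxp hz'.le)
  rw [inner_sub_right, h1] at h2
  have := (abs_le.1 (h p hp)).2
  linarith

lemma net_bound_s16 {E F : Type*} [NormedAddCommGroup E] [InnerProductSpace ℝ E] [FiniteDimensional ℝ E]
    [NormedAddCommGroup F] [InnerProductSpace ℝ F] [FiniteDimensional ℝ F] (L : E →L[ℝ] F) {N : Finset E}
    (hN : ∀ x : E, ‖x‖ ≤ 1 → ∃ p ∈ N, ‖x - p‖ ≤ 1 / 2) (d S : ℝ)
    (h : ∀ p ∈ N, ∀ q ∈ N, |‖L (p + q)‖ ^ 2 - d * ‖p + q‖ ^ 2| ≤ S ∧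
      |‖L (p - q)‖ ^ 2 - d * ‖p - q‖ ^ 2| ≤ S) (v : E) :
    (d - 2 * S) * ‖v‖ ^ 2 ≤ ‖L v‖ ^ 2 := by
  have := FiniteDimensional.complete ℝ E
  have := FiniteDimensional.complete ℝ F
  let T : E →L[ℝ] E := (ContinuousLinearMap.adjoint L) ∘L L - d • ContinuousLinearMap.id ℝ E
  have hT : ∀ p q, inner ℝ (T p) q = inner ℝ (L p) (L q) - d * inner ℝ p q := by
    intro p q
    simp [T, inner_sub_left, ContinuousLinearMap.adjoint_inner_left, real_inner_smul_left]
  have h1 : ∀ p ∈ N, ‖T p‖ ≤ S := by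
    intro p hp
    have : ‖T p‖ ≤ 2 * (S / 2) := by
      apply net_dual hN
      intro q hq
      have e : inner ℝ (T p) q = ((‖L (p + q)‖ ^ 2 - d * ‖p + q‖ ^ 2) -
          (‖L (p - q)‖ ^ 2 - d * ‖p - q‖ ^ 2)) / 4 := by
        rw [hT, map_add, map_sub, norm_add_sq_real, norm_sub_sq_real, norm_add_sq_real, norm_sub_sq_real]
        ring
      rw [e]
      have ⟨a, b⟩ := h p hp q hq
      rw [abs_le] at a b ⊢
      constructor <;> linarith [a.1, a.2, b.1, b.2]
    linarith
  have hS : 0 ≤ S := by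
    obtain ⟨p, hp, -⟩ := hN 0 (by simp)
    exact (norm_nonneg _).trans (h1 p hp)
  have h2 : ‖T‖ ≤ S + ‖T‖ / 2 := by
    refine ContinuousLinearMap.opNorm_le_of_unit_norm (by positivity) ?_
    intro x hx
    obtain ⟨p, hp, hxp⟩ := hN x hx.le
    have e : T x = T p + T (x - p) := by rw [← map_add]; congr 1; abel
    rw [e]
    refine (norm_add_le _ _).trans (add_le_add (h1 p hp) ?_)
    refine (T.le_opNorm _).trans ?_
    nlinarith [norm_nonneg T]
  have h3 : ‖T‖ ≤ 2 * S := by linarith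
  have h4 := hT v v
  rw [real_inner_self_eq_norm_sq, real_inner_self_eq_norm_sq] at h4
  have h5 : |inner ℝ (T v) v| ≤ 2 * S * ‖v‖ ^ 2 := by
    refine (abs_real_inner_le_norm _ _).trans ?_
    have := T.le_opNorm v
    nlinarith [norm_nonneg v, norm_nonneg (T v), sq_nonneg ‖v‖, mul_le_mul_of_nonneg_right this (norm_nonneg v)]
  have := (abs_le.1 h5).1
  nlinarith

lemma net_prob {Ω κ : Type*} [MeasurableSpace Ω] [Fintype κ] {d : ℕ} {μ : Measure Ω}
    {A : Ω → Matrix κ (Fin d) ℝ} (hm : ∀ i j, Measurable fun ω => A ω i j)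
    (hi : iIndepFun (fun (p : κ × Fin d) ω => A ω p.1 p.2) μ)
    (hl : ∀ i j, Measure.map (fun ω => A ω i j) μ = gaussianReal 0 1)
    {m : ℕ} (hmk : Fintype.card κ = m) (hm0 : 0 < m) (hd : 16 * (m : ℝ) ≤ d) :
    μ.real {ω | ∃ v : κ → ℝ, ∑ j, (∑ k, v k * A ω k j) ^ 2 < (d - 96 * √(m * d)) * ∑ k, v k ^ 2}
      ≤ 25 ^ m * (4 * Real.exp (-8 * m)) := by
  classical
  have := hi.isProbabilityMeasure
  obtain ⟨N, hNc, hN1, hN⟩ := exists_net (EuclideanSpace ℝ κ)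
  rw [finrank_euclideanSpace, hmk] at hNc
  let B : EuclideanSpace ℝ κ → Set Ω := fun a =>
    {ω | 48 * √((m : ℝ) * d) ≤ |∑ j, (∑ k, a k * A ω k j) ^ 2 - d * ∑ k, a k ^ 2|}
  have hB : ∀ a : EuclideanSpace ℝ κ, ‖a‖ ≤ 2 → μ.real (B a) ≤ 2 * Real.exp (-8 * m) := by
    intro a ha
    apply conc hm hi hl a _ (by exact_mod_cast hm0) hd
    rw [← EuclideanSpace.real_norm_sq_eq]
    nlinarith [norm_nonneg a]
  have hsub : {ω | ∃ v : κ → ℝ, ∑ j, (∑ k, v k * A ω k j) ^ 2 < (d - 96 * √(m * d)) * ∑ k, v k ^ 2} ⊆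
      ⋃ pq ∈ N ×ˢ N, (B (pq.1 + pq.2) ∪ B (pq.1 - pq.2)) := by
    intro ω hω
    obtain ⟨v, hv⟩ := hω
    by_contra hcon
    simp only [Set.mem_iUnion, not_exists, Set.mem_union, not_or] at hcon
    let L : EuclideanSpace ℝ κ →L[ℝ] EuclideanSpace ℝ (Fin d) :=
      LinearMap.toContinuousLinearMap (Matrix.toEuclideanLin (A ω)ᵀ)
    have hL : ∀ a : EuclideanSpace ℝ κ, ‖L a‖ ^ 2 = ∑ j, (∑ k, a k * A ω k j) ^ 2 := by
      intro a
      rw [EuclideanSpace.real_norm_sq_eq]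
      refine Finset.sum_congr rfl fun j _ => ?_
      congr 1
      simp [L, Matrix.toEuclideanLin_apply, Matrix.mulVec, dotProduct, mul_comm]
    have hBn : ∀ a : EuclideanSpace ℝ κ, ω ∉ B a → |‖L a‖ ^ 2 - d * ‖a‖ ^ 2| ≤ 48 * √((m : ℝ) * d) := by
      intro a ha
      rw [hL, EuclideanSpace.real_norm_sq_eq]
      exact (not_le.1 ha).le
    have key := net_bound_s16 L hN d (48 * √((m : ℝ) * d)) (fun p hp q hq => by
      have := hcon (p, q) (Finset.mem_product.2 ⟨hp, hq⟩)
      exact ⟨hBn _ this.1, hBn _ this.2⟩) (WithLp.toLp 2 v)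
    rw [hL, EuclideanSpace.real_norm_sq_eq] at key
    simp only at key
    linarith
  refine (measureReal_mono hsub (measure_ne_top _ _)).trans ((measureReal_biUnion_finset_le _ _).trans ?_)
  have : ∀ pq ∈ N ×ˢ N, μ.real (B (pq.1 + pq.2) ∪ B (pq.1 - pq.2)) ≤ 4 * Real.exp (-8 * m) := by
    intro pq h
    obtain ⟨h1, h2⟩ := Finset.mem_product.1 h
    have a1 := hB (pq.1 + pq.2) ((norm_add_le _ _).trans (by linarith [hN1 _ h1, hN1 _ h2]))
    have a2 := hB (pq.1 - pq.2) ((norm_sub_le _ _).trans (by linarith [hN1 _ h1, hN1 _ h2]))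
    have := measureReal_union_le (μ := μ) (B (pq.1 + pq.2)) (B (pq.1 - pq.2))
    linarith
  refine (Finset.sum_le_sum this).trans ?_
  rw [Finset.sum_const, nsmul_eq_mul, Finset.card_product]
  refine mul_le_mul_of_nonneg_right ?_ (by positivity)
  have : N.card * N.card ≤ 5 ^ m * 5 ^ m := Nat.mul_le_mul hNc hNc
  rw [← mul_pow] at this
  exact_mod_cast this

lemma num_bound_s16 {n : ℕ} (hn : 2 ≤ n) :
    (25 : ℝ) ^ (n - 1) * (4 * Real.exp (-8 * ((n - 1 : ℕ) : ℝ))) ≤ 1 / (n : ℝ) ^ 2 := by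
  obtain ⟨m, rfl⟩ : ∃ m, n = m + 1 := ⟨n - 1, by omega⟩
  simp only [Nat.add_sub_cancel]
  have hm : (1 : ℝ) ≤ m := by exact_mod_cast (by omega : 1 ≤ m)
  have he : (2.7 : ℝ) ≤ Real.exp 1 := by linarith [Real.exp_one_gt_d9]
  have h25 : (25 : ℝ) ≤ Real.exp 4 := by
    have : Real.exp 4 = Real.exp 1 ^ 4 := by rw [← Real.exp_nat_mul]; norm_num
    rw [this]
    calc (25 : ℝ) ≤ 2.7 ^ 4 := by norm_num
      _ ≤ _ := by gcongr
  have h1 : (25 : ℝ) ^ m ≤ Real.exp (4 * m) := by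
    calc (25 : ℝ) ^ m ≤ Real.exp 4 ^ m := by gcongr
      _ = _ := by rw [← Real.exp_nat_mul]; ring_nf
  have h2 : ((m + 1 : ℕ) : ℝ) ^ 2 ≤ Real.exp (2 * m) := by
    calc ((m + 1 : ℕ) : ℝ) ^ 2 ≤ Real.exp m ^ 2 := by
          push_cast; gcongr; exact Real.add_one_le_exp _
      _ = _ := by rw [← Real.exp_nat_mul]; norm_num
  have h3 : (4 : ℝ) ≤ Real.exp (2 * m) := by
    calc (4 : ℝ) ≤ 2.7 ^ 2 := by norm_num
      _ ≤ Real.exp 1 ^ 2 := by gcongr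
      _ = Real.exp 2 := by rw [← Real.exp_nat_mul]; norm_num
      _ ≤ _ := Real.exp_le_exp.2 (by linarith)
  rw [le_div_iff₀ (by positivity)]
  calc (25 : ℝ) ^ m * (4 * Real.exp (-8 * (m : ℝ))) * ((m + 1 : ℕ) : ℝ) ^ 2
      ≤ Real.exp (4 * m) * (Real.exp (2 * m) * Real.exp (-8 * (m : ℝ))) * Real.exp (2 * m) := by gcongr
    _ = 1 := by rw [← Real.exp_add, ← Real.exp_add, ← Real.exp_add]; ring_nf; simp

/-- Deterministic bound on the min-norm interpolator. -/
lemma det_bound_s16 {κ : Type*} [Fintype κ] [DecidableEq κ] {d : ℕ} (A : Matrix κ (Fin d) ℝ) (y : κ → ℝ)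
    (hu : IsUnit (A * Aᵀ).det) {c : ℝ} (hc : 0 < c)
    (h : ∀ v : κ → ℝ, c * ∑ k, v k ^ 2 ≤ ∑ j, (∑ k, v k * A k j) ^ 2) :
    ∑ j, ((Aᵀ *ᵥ ((A * Aᵀ)⁻¹ *ᵥ y)) j) ^ 2 ≤ (∑ k, y k ^ 2) / c := by
  set v := (A * Aᵀ)⁻¹ *ᵥ y with hv
  have hKv : (A * Aᵀ) *ᵥ v = y := by
    rw [hv, Matrix.mulVec_mulVec, Matrix.mul_nonsing_inv _ hu, Matrix.one_mulVec]
  have e1 : ∑ j, ((Aᵀ *ᵥ v) j) ^ 2 = ∑ k, v k * y k := by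
    have : ∑ j, ((Aᵀ *ᵥ v) j) ^ 2 = (Aᵀ *ᵥ v) ⬝ᵥ (Aᵀ *ᵥ v) := by
      simp [dotProduct, sq]
    rw [this, Matrix.dotProduct_mulVec, Matrix.vecMul_transpose, Matrix.mulVec_mulVec, hKv,
      dotProduct_comm]
    rfl
  have e2 : ∑ j, ((Aᵀ *ᵥ v) j) ^ 2 = ∑ j, (∑ k, v k * A k j) ^ 2 := by
    simp [Matrix.mulVec, dotProduct, mul_comm]
  have hcs := Finset.sum_mul_sq_le_sq_mul_sq Finset.univ v y
  have hh := h v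
  rw [← e2] at hh
  rw [← e1] at hcs
  set q := ∑ j, ((Aᵀ *ᵥ v) j) ^ 2
  have hq : 0 ≤ q := Finset.sum_nonneg fun _ _ => sq_nonneg _
  have hy : 0 ≤ ∑ k, y k ^ 2 := Finset.sum_nonneg fun _ _ => sq_nonneg _
  rw [le_div_iff₀ hc]
  rcases hq.eq_or_lt with h0 | h0
  · rw [← h0]; simpa using hy
  · by_contra! hlt
    have : c * q ^ 2 ≤ q * ∑ k, y k ^ 2 := by
      calc c * q ^ 2 ≤ c * ((∑ k, v k ^ 2) * ∑ k, y k ^ 2) := by gcongr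
        _ = (c * (∑ k, v k ^ 2)) * ∑ k, y k ^ 2 := by ring
        _ ≤ _ := by gcongr
    nlinarith

lemma gauss_tail {v L : ℝ} (hv : 0 ≤ v) (hL : 0 < L) (hvL : v ≤ 1 / (2 * L)) :
    gaussianReal 0 (Real.toNNReal v) {x | 1 ≤ x} ≤
      ENNReal.ofReal (1 / (2 * Real.exp L * √(Real.pi * L))) := by
  rcases hv.eq_or_lt with h0 | h0
  · rw [← h0]; simp
  have hvn : Real.toNNReal v ≠ 0 := by simpa using h0
  have hpi := Real.pi_pos
  let g : ℝ → ℝ := fun x => -(v * gaussianPDFReal 0 (Real.toNNReal v) x)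
  let g' : ℝ → ℝ := fun x => x * gaussianPDFReal 0 (Real.toNNReal v) x
  have hgd : ∀ x, HasDerivAt g (g' x) x := by
    intro x
    simp only [g, g', gaussianPDFReal, Real.coe_toNNReal v hv]
    have h1 : HasDerivAt (fun x : ℝ => -(x - 0) ^ 2 / (2 * v)) (-(2 * x) / (2 * v)) x := by
      have := (((hasDerivAt_id x).sub_const 0).pow 2).neg.div_const (2 * v)
      simpa using this
    have h2 := ((h1.exp.const_mul ((√(2 * Real.pi * v))⁻¹)).const_mul v).neg
    refine h2.congr_deriv ?_
    field_simp
  have hgt : Filter.Tendsto g Filter.atTop (nhds 0) := by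
    have h1 : Filter.Tendsto (fun x : ℝ => -(x - 0) ^ 2 / (2 * v)) Filter.atTop Filter.atBot := by
      simp only [sub_zero, neg_div]
      apply Filter.tendsto_neg_atTop_atBot.comp
      exact (Filter.tendsto_pow_atTop (by norm_num)).atTop_div_const (by positivity)
    have := (((Real.tendsto_exp_atBot.comp h1).const_mul ((√(2 * Real.pi * v))⁻¹)).const_mul v).neg
    simp only [mul_zero, neg_zero] at this
    simpa only [g, gaussianPDFReal, Real.coe_toNNReal v hv, Function.comp_def] using this
  have hpos : ∀ x ∈ Set.Ioi (1:ℝ), 0 ≤ g' x := fun x hx =>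
    mul_nonneg (by have := Set.mem_Ioi.1 hx; linarith) (gaussianPDFReal_nonneg _ _ _)
  have hint := integrableOn_Ioi_deriv_of_nonneg' (a := 1) (fun x _ => hgd x) hpos hgt
  have hval := integral_Ioi_of_hasDerivAt_of_nonneg' (a := 1) (fun x _ => hgd x) hpos hgt
  have hIci : {x : ℝ | 1 ≤ x} = Set.Ici 1 := rfl
  rw [gaussianReal_apply _ hvn, hIci, setLIntegral_congr Ioi_ae_eq_Ici.symm]
  calc ∫⁻ x in Set.Ioi 1, gaussianPDF 0 (Real.toNNReal v) x
      ≤ ∫⁻ x in Set.Ioi 1, ENNReal.ofReal (g' x) := by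
        apply setLIntegral_mono' measurableSet_Ioi
        intro x hx
        apply ENNReal.ofReal_le_ofReal
        have := Set.mem_Ioi.1 hx
        exact le_mul_of_one_le_left (gaussianPDFReal_nonneg _ _ _) this.le
    _ = ENNReal.ofReal (∫ x in Set.Ioi 1, g' x) := by
        rw [ofReal_integral_eq_lintegral_ofReal hint]
        exact (ae_restrict_iff' measurableSet_Ioi).2 (Filter.Eventually.of_forall hpos)
    _ ≤ _ := by
        apply ENNReal.ofReal_le_ofReal
        rw [hval]
        simp only [g, gaussianPDFReal, Real.coe_toNNReal v hv]
        have hv2 : v = √v * √v := (Real.mul_self_sqrt hv).symm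
        have hsv : 0 < √v := Real.sqrt_pos.2 h0
        have e1 : v * ((√(2 * Real.pi * v))⁻¹) = √(v / (2 * Real.pi)) := by
          rw [Real.sqrt_mul (by positivity), Real.sqrt_div hv]
          have : 0 < √(2 * Real.pi) := by positivity
          field_simp
          rw [Real.sq_sqrt hv]
        have e2 : √(v / (2 * Real.pi)) ≤ 1 / (2 * √(Real.pi * L)) := by
          apply Real.sqrt_le_iff.2
          refine ⟨by positivity, ?_⟩
          rw [div_pow, mul_pow, Real.sq_sqrt (by positivity), div_le_div_iff₀ (by positivity) (by positivity)]
          rw [le_div_iff₀ (by positivity)] at hvL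
          nlinarith
        have e3 : Real.exp (-(1 - 0) ^ 2 / (2 * v)) ≤ (Real.exp L)⁻¹ := by
          rw [← Real.exp_neg]
          apply Real.exp_le_exp.2
          rw [le_div_iff₀ (by positivity)] at hvL
          rw [div_le_iff₀ (by positivity)]
          nlinarith
        have : 0 - -(v * ((√(2 * Real.pi * v))⁻¹ * Real.exp (-(1 - 0) ^ 2 / (2 * v))))
            = √(v / (2 * Real.pi)) * Real.exp (-(1 - 0) ^ 2 / (2 * v)) := by rw [← e1]; ring
        rw [this]
        calc _ ≤ 1 / (2 * √(Real.pi * L)) * (Real.exp L)⁻¹ := by gcongr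
          _ = _ := by field_simp

lemma fubini_part {Ω κ : Type*} [MeasurableSpace Ω] [Fintype κ] {d : ℕ} {μ : Measure Ω}
    [IsProbabilityMeasure μ] {A : Ω → κ → Fin d → ℝ} {x : Ω → Fin d → ℝ} (hA : Measurable A)
    (hx : Measurable x) (hAx : IndepFun A x μ) {w : (κ → Fin d → ℝ) → Fin d → ℝ} (hw : Measurable w)
    {G : Set (κ → Fin d → ℝ)} (hG : MeasurableSet G) {b : ENNReal}
    (h : ∀ a ∈ G, μ {ω | 1 ≤ ∑ j, w a j * x ω j} ≤ b) :
    μ {ω | A ω ∈ G ∧ 1 ≤ ∑ j, w (A ω) j * x ω j} ≤ b := by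
  let T : Set ((κ → Fin d → ℝ) × (Fin d → ℝ)) := {p | p.1 ∈ G ∧ 1 ≤ ∑ j, w p.1 j * p.2 j}
  have hT : MeasurableSet T := by
    apply MeasurableSet.inter
    · exact measurable_fst hG
    · have hf : Measurable (fun p : (κ → Fin d → ℝ) × (Fin d → ℝ) => ∑ j, w p.1 j * p.2 j) := by
        refine Finset.measurable_sum _ fun j _ => ?_
        exact ((measurable_pi_apply j).comp (hw.comp measurable_fst)).mul
          ((measurable_pi_apply j).comp measurable_snd)
      exact measurableSet_le measurable_const hf
  have e1 : μ {ω | A ω ∈ G ∧ 1 ≤ ∑ j, w (A ω) j * x ω j} = μ.map (fun ω => (A ω, x ω)) T := by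
    rw [Measure.map_apply (hA.prodMk hx) hT]; rfl
  have : IsProbabilityMeasure (μ.map A) := Measure.isProbabilityMeasure_map hA.aemeasurable
  have : IsProbabilityMeasure (μ.map x) := Measure.isProbabilityMeasure_map hx.aemeasurable
  rw [e1, (indepFun_iff_map_prod_eq_prod_map_map hA.aemeasurable hx.aemeasurable).1 hAx,
    Measure.prod_apply hT]
  calc _ ≤ ∫⁻ _, b ∂(μ.map A) := by
        apply lintegral_mono
        intro a
        simp only
        rw [Measure.map_apply hx (measurable_prodMk_left hT)]
        by_cases ha : a ∈ G
        · refine le_trans (measure_mono ?_) (h a ha)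
          intro ω hω
          exact hω.2
        · have : x ⁻¹' (Prod.mk a ⁻¹' T) = ∅ := by
            ext ω
            simp [T, ha]
          rw [this]; simp
    _ = b := by simp

lemma w_meas {κ : Type*} [Fintype κ] [DecidableEq κ] {d : ℕ} (y : κ → ℝ) (c : ℝ) :
    Measurable (fun (a : κ → Fin d → ℝ) (j : Fin d) =>
      c * (((Matrix.of a)ᵀ *ᵥ ((Matrix.of a * (Matrix.of a)ᵀ)⁻¹ *ᵥ y)) j)) := by
  have hof : Continuous (fun a : κ → Fin d → ℝ => (Matrix.of a : Matrix κ (Fin d) ℝ)) := continuous_id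
  have hK : Continuous (fun a : κ → Fin d → ℝ => (Matrix.of a * (Matrix.of a)ᵀ)) :=
    hof.matrix_mul hof.matrix_transpose
  have hinv : ∀ k l, Measurable (fun a : κ → Fin d → ℝ => ((Matrix.of a * (Matrix.of a)ᵀ)⁻¹) k l) := by
    intro k l
    simp only [Matrix.inv_def, Matrix.smul_apply, Ring.inverse_eq_inv', smul_eq_mul]
    exact hK.matrix_det.measurable.inv.mul (hK.matrix_adjugate.matrix_elem k l).measurable
  refine measurable_pi_lambda _ fun j => ?_
  simp only [Matrix.mulVec, dotProduct, Matrix.transpose_apply, Matrix.of_apply]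
  refine Measurable.const_mul ?_ _
  refine Finset.measurable_sum _ fun k _ => ?_
  refine Measurable.mul (by fun_prop) (Finset.measurable_sum _ fun l _ => ?_)
  exact (hinv k l).mul_const _

lemma dim_bound : ∀ n : ℕ, 16 ≤ Real.log n → 96 ≤ √(Real.log n) → 2 ≤ n → ∀ ε : ℝ, 192 / √(Real.log n) ≤ ε →
    16 * ((n - 1 : ℕ) : ℝ) ≤ (⌈(2 + ε) * n * Real.log n⌉₊ : ℝ) ∧
    2 * ((n - 1 : ℕ) : ℝ) * Real.log n ≤ (⌈(2 + ε) * n * Real.log n⌉₊ : ℝ) -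
      96 * √(((n - 1 : ℕ) : ℝ) * (⌈(2 + ε) * n * Real.log n⌉₊ : ℝ)) := by
  intro n hL hsL hn ε hε
  have hD := Nat.le_ceil ((2 + ε) * n * Real.log n)
  set D : ℝ := (⌈(2 + ε) * n * Real.log n⌉₊ : ℝ)
  set L := Real.log n
  set l := √L with hl
  have hl2 : l ^ 2 = L := Real.sq_sqrt (by linarith)
  have hn1 : ((n - 1 : ℕ) : ℝ) ≤ n := by exact_mod_cast Nat.sub_le n 1
  have hn0 : (2 : ℝ) ≤ n := by exact_mod_cast hn
  have hl0 : 0 < l := by linarith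
  have hε0 : 0 < ε := lt_of_lt_of_le (by positivity) hε
  rw [div_le_iff₀ hl0] at hε
  have hnL : 0 < n * L := by positivity
  have hD0 : 0 ≤ D := le_trans (by positivity) hD
  set M := ((n - 1 : ℕ) : ℝ)
  have hM0 : 0 ≤ M := Nat.cast_nonneg _
  constructor
  · nlinarith
  · -- ε / √(2+ε) * l ≥ 96
    have h1 : 96 ^ 2 * (2 + ε) ≤ (ε * l) ^ 2 := by
      by_cases h2 : ε ≤ 2
      · nlinarith
      · push Not at h2
        have : ε * 96 ≤ ε * l := by gcongr
        nlinarith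
    have h2 : √(M * D) ≤ (D - 2 * n * L) / 96 := by
      have hDn : 0 ≤ D - 2 * n * L := by nlinarith [mul_pos hε0 hnL]
      apply Real.sqrt_le_iff.2
      refine ⟨by positivity, ?_⟩
      have h3 : M * D ≤ n * D := by gcongr
      have h4 : D * ε ≤ (2 + ε) * (D - 2 * n * L) := by nlinarith
      -- 96^2 n D ≤ (D-2nL)^2
      have h5 : (D * ε) ^ 2 ≤ ((2 + ε) * (D - 2 * n * L)) ^ 2 := by gcongr
      have h6 : 96 ^ 2 * (2 + ε) * (n * D) * (2 + ε) ≤ (D * ε) ^ 2 := by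
        calc 96 ^ 2 * (2 + ε) * (n * D) * (2 + ε) ≤ (ε * l) ^ 2 * (n * D) * (2 + ε) := by gcongr
          _ = ε ^ 2 * D * ((2 + ε) * n * L) := by rw [← hl2]; ring
          _ ≤ ε ^ 2 * D * D := by gcongr
          _ = _ := by ring
      have h7 : (2 + ε) ^ 2 * (96 ^ 2 * (n * D)) ≤ (2 + ε) ^ 2 * (D - 2 * n * L) ^ 2 := by
        nlinarith
      have h8 := le_of_mul_le_mul_left h7 (by positivity)
      rw [div_pow, le_div_iff₀ (by norm_num)]
      linarith
    have : 2 * M * L ≤ 2 * n * L := by gcongr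
    linarith

/-- Above the threshold `d = ⌈(2+ε) n ln n⌉`, for each `i` the probability that the
leave-one-out statistic `yᵢ y₋ᵢᵀ K₋ᵢ⁻¹ X₋ᵢ xᵢ` is at least `1` is at most
`1/(2n√(π log n)) + 1/n²`. -/
theorem stmt16 :
    ∃ C₂ > (0 : ℝ), ∃ n₀ : ℕ, ∀ n ≥ n₀, ∀ ε : ℝ,
      C₂ / Real.sqrt (Real.log n) ≤ ε →
      ∀ (Ω : Type*) (_ : MeasurableSpace Ω) (μ : Measure Ω), IsProbabilityMeasure μ →
      ∀ (X : Ω → Matrix (Fin n) (Fin ⌈(2 + ε) * n * Real.log n⌉₊) ℝ) (y : Fin n → ℝ),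
        (∀ i, y i = 1 ∨ y i = -1) → IsGaussSample μ X →
        ∀ i : Fin n,
          μ {ω | IsUnit (rowDel (X ω) i * (rowDel (X ω) i)ᵀ).det ∧
              1 ≤ y i * (vecDel y i ⬝ᵥ ((rowDel (X ω) i * (rowDel (X ω) i)ᵀ)⁻¹ *ᵥ
                (rowDel (X ω) i *ᵥ X ω i)))} ≤
            ENNReal.ofReal
              (1 / (2 * n * Real.sqrt (Real.pi * Real.log n)) + 1 / (n : ℝ) ^ 2) := by
  refine ⟨192, by norm_num, ⌈Real.exp (96 ^ 2)⌉₊, ?_⟩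
  intro n hn ε hε Ω _ μ hμ X y hy hX i
  have hn' : Real.exp (96 ^ 2) ≤ n := (Nat.le_ceil _).trans (by exact_mod_cast hn)
  have hL96 : (96 : ℝ) ^ 2 ≤ Real.log n :=
    (Real.le_log_iff_exp_le (lt_of_lt_of_le (Real.exp_pos _) hn')).2 hn'
  have hn2 : 2 ≤ n := by
    have : (2 : ℝ) ≤ n := by linarith [Real.add_one_le_exp ((96 : ℝ) ^ 2)]
    exact_mod_cast this
  have hnpos : (0 : ℝ) < n := by exact_mod_cast (by omega : 0 < n)
  have hLpos : 0 < Real.log n := by linarith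
  obtain ⟨hd1, hd2⟩ := dim_bound n (by linarith) (Real.le_sqrt_of_sq_le hL96) hn2 ε hε
  generalize ⌈(2 + ε) * n * Real.log n⌉₊ = d at X hX hd1 hd2 ⊢
  obtain ⟨hXm, hXi, hXl⟩ := hX
  set A : Ω → {j : Fin n // j ≠ i} → Fin d → ℝ := fun ω => rowDel (X ω) i with hAdef
  have hcard : Fintype.card {j : Fin n // j ≠ i} = n - 1 := by simp
  have hm1 : 0 < n - 1 := by omega
  have hm1' : (0 : ℝ) < ((n - 1 : ℕ) : ℝ) := by exact_mod_cast hm1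
  have hAm : ∀ k j, Measurable fun ω => A ω k j := fun k j => hXm k.1 j
  have hAi : iIndepFun (fun (p : {j : Fin n // j ≠ i} × Fin d) ω => A ω p.1 p.2) μ :=
    hXi.precomp (g := fun p : {j : Fin n // j ≠ i} × Fin d => (p.1.1, p.2)) (by
      intro p q h
      simp only [Prod.mk.injEq] at h
      exact Prod.ext (Subtype.ext h.1) h.2)
  have hAl : ∀ k j, Measure.map (fun ω => A ω k j) μ = gaussianReal 0 1 := fun k j => hXl k.1 j
  have hprob := net_prob (A := fun ω => Matrix.of (A ω)) hAm hAi hAl hcard hm1 hd1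
  have hnum := hprob.trans (num_bound_s16 hn2)
  have hAx : IndepFun A (fun ω => X ω i) μ := by
    classical
    have h := hXi.indepFun_finset (Finset.univ.filter fun p : Fin n × Fin d => p.1 ≠ i)
      (Finset.univ.filter fun p : Fin n × Fin d => p.1 = i)
      (by
        rw [Finset.disjoint_left]
        intro p hp hq
        simp only [Finset.mem_filter, Finset.mem_univ, true_and] at hp hq
        exact hp hq) (fun p => hXm p.1 p.2)
    exact h.comp
      (φ := fun f (k : {j : Fin n // j ≠ i}) (j : Fin d) => f ⟨(k.1, j), by simpa using k.2⟩)
      (ψ := fun f (j : Fin d) => f ⟨(i, j), by simp⟩)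
      (measurable_pi_lambda _ fun k => measurable_pi_lambda _ fun j => measurable_pi_apply _)
      (measurable_pi_lambda _ fun j => measurable_pi_apply _)
  set w : ({j : Fin n // j ≠ i} → Fin d → ℝ) → Fin d → ℝ := fun a j =>
    y i * (((Matrix.of a)ᵀ *ᵥ ((Matrix.of a * (Matrix.of a)ᵀ)⁻¹ *ᵥ vecDel y i)) j) with hwdef
  have hw : Measurable w := w_meas (vecDel y i) (y i)
  have hy2 : ∀ k, y k ^ 2 = 1 := fun k => by rcases hy k with h | h <;> simp [h]
  let G : Set ({j : Fin n // j ≠ i} → Fin d → ℝ) := {a | ∑ j, w a j ^ 2 ≤ 1 / (2 * Real.log n)}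
  have hG : MeasurableSet G := by
    have hf : Measurable (fun a => ∑ j, w a j ^ 2) :=
      Finset.measurable_sum _ fun j _ => ((measurable_pi_apply j).comp hw).pow_const 2
    exact measurableSet_le hf measurable_const
  have hxi : iIndepFun (fun (j : Fin d) ω => X ω i j) μ :=
    hXi.precomp (g := fun j : Fin d => (i, j)) (by
      intro p q h
      exact (Prod.ext_iff.1 h).2)
  have hF := fubini_part (μ := μ) (A := A) (x := fun ω => X ω i)
    (measurable_pi_lambda _ fun k => measurable_pi_lambda _ fun j => hAm k j)
    (measurable_pi_lambda _ fun j => hXm i j) hAx hw hG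
    (b := ENNReal.ofReal (1 / (2 * n * Real.sqrt (Real.pi * Real.log n)))) (by
      intro a ha
      have hlaw := lin_law (fun j => hXm i j) hxi (fun j => hXl i j) (w a)
      have ht := gauss_tail (Finset.sum_nonneg fun j _ => sq_nonneg (w a j)) hLpos ha
      rw [← hlaw, Real.exp_log hnpos,
        Measure.map_apply (Finset.measurable_sum _ fun j _ => (hXm i j).const_mul _)
          (show MeasurableSet {x : ℝ | 1 ≤ x} from measurableSet_Ici)] at ht
      exact ht)
  have hsub : {ω | IsUnit (rowDel (X ω) i * (rowDel (X ω) i)ᵀ).det ∧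
        1 ≤ y i * (vecDel y i ⬝ᵥ ((rowDel (X ω) i * (rowDel (X ω) i)ᵀ)⁻¹ *ᵥ
          (rowDel (X ω) i *ᵥ X ω i)))} ⊆
      {ω | A ω ∈ G ∧ 1 ≤ ∑ j, w (A ω) j * X ω i j} ∪
      {ω | ∃ v : {j : Fin n // j ≠ i} → ℝ, ∑ j, (∑ k, v k * Matrix.of (A ω) k j) ^ 2 <
        (d - 96 * √(((n - 1 : ℕ) : ℝ) * d)) * ∑ k, v k ^ 2} := by
    rintro ω ⟨hu, h1⟩
    by_cases hbad : ∃ v : {j : Fin n // j ≠ i} → ℝ, ∑ j, (∑ k, v k * Matrix.of (A ω) k j) ^ 2 <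
        (d - 96 * √(((n - 1 : ℕ) : ℝ) * d)) * ∑ k, v k ^ 2
    · exact Or.inr hbad
    left
    push Not at hbad
    have hc : 0 < (d : ℝ) - 96 * √(((n - 1 : ℕ) : ℝ) * d) :=
      lt_of_lt_of_le (by positivity) hd2
    have hdet := det_bound_s16 (rowDel (X ω) i) (vecDel y i) hu hc hbad
    have hysum : ∑ k, vecDel y i k ^ 2 = ((n - 1 : ℕ) : ℝ) := by
      simp only [vecDel, hy2, Finset.sum_const, Finset.card_univ, hcard, nsmul_eq_mul, mul_one]
    refine ⟨?_, ?_⟩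
    · show ∑ j, (y i * ((rowDel (X ω) i)ᵀ *ᵥ ((rowDel (X ω) i * (rowDel (X ω) i)ᵀ)⁻¹ *ᵥ vecDel y i)) j) ^ 2
        ≤ 1 / (2 * Real.log n)
      simp only [mul_pow, hy2, one_mul]
      refine hdet.trans ?_
      rw [hysum, div_le_div_iff₀ hc (by positivity)]
      linarith
    · refine h1.trans (le_of_eq ?_)
      show _ = ∑ j, (y i * ((rowDel (X ω) i)ᵀ *ᵥ ((rowDel (X ω) i * (rowDel (X ω) i)ᵀ)⁻¹ *ᵥ vecDel y i)) j) * X ω i j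
      simp only [mul_assoc]
      rw [← Finset.mul_sum]
      congr 1
      generalize rowDel (X ω) i = B
      have hsymm : ((B * Bᵀ)⁻¹)ᵀ = (B * Bᵀ)⁻¹ := by
        rw [Matrix.transpose_nonsing_inv, Matrix.transpose_mul, Matrix.transpose_transpose]
      show _ = (Bᵀ *ᵥ ((B * Bᵀ)⁻¹ *ᵥ vecDel y i)) ⬝ᵥ X ω i
      rw [Matrix.dotProduct_mulVec, ← Matrix.mulVec_transpose, hsymm, Matrix.dotProduct_mulVec,
        ← Matrix.mulVec_transpose]
  refine (measure_mono hsub).trans ((measure_union_le _ _).trans ?_)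
  rw [ENNReal.ofReal_add (by positivity) (by positivity)]
  refine add_le_add hF ?_
  rw [← ofReal_measureReal]
  exact ENNReal.ofReal_le_ofReal hnum


end
end
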